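/- The L-structure 𝒜 is finitely generated (there is a finite subset of A whose closure under the interpretations in 𝒜 of all function symbols of L is all of A) if and only if the group G(𝒜) is finitely generated. -/

import Mathlib

/-!
Common setup: an `L`-structure `𝒜` for a language whose symbols are enumerated
(`m`-th symbol, `m ≥ 1`, each a function or relation symbol of arity ≥ 1), and the
presented group `G(𝒜)` of Harrison-Trainor and Ho.
-/

/-- A first-order language with symbols enumerated by `ℕ` (the `m`-th symbol, for `m ≥ 1`,
is a function symbol if `isFunc m`, and a relation symbol otherwise, of arity `arity m ≥ 1`),
together with an interpretation on a domain `A`: `funcInterp m` interprets the `m`-th symbol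
when it is a function symbol, and `relInterp m` when it is a relation symbol. -/
structure IndexedStructure where
  A : Type
  arity : ℕ → ℕ
  arity_pos : ∀ m, 1 ≤ m → 1 ≤ arity m
  isFunc : ℕ → Prop
  funcInterp : ∀ m, (Fin (arity m) → A) → A
  relInterp : ∀ m, (Fin (arity m) → A) → Prop

/-- The generating set of `G(𝒜)`: one generator for each element of the domain `A`,
plus five further generators `b`, `c`, `d`, `f₁`, `f₂`. -/
inductive GenSym (A : Type) : Type
  | elt : A → GenSym A
  | b : GenSym A
  | c : GenSym A
  | d : GenSym A
  | f1 : GenSym A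
  | f2 : GenSym A

/-- `chainProd lo x y = x y^{(lo+1)²} x y^{(lo+2)²} ⋯ x y^{(lo+1000)²}`.
So `u_A = chainProd 0`, `u_b = chainProd 1000`, `u_c = chainProd 2000`,
`u_d = chainProd 3000`, and `v = chainProd 4000`. -/
def chainProd {G : Type*} [Group G] (lo : ℕ) (x y : G) : G :=
  ((List.range 1000).map fun k => x * y ^ ((lo + k + 1) ^ 2)).prod

/-- `wProd m xs y = x₁⋯xₙ y^{100m+1} x₁⋯xₙ y^{100m+2} ⋯ x₁⋯xₙ y^{100m+100}`,
i.e. the word `w_m(x₁,…,xₙ,y)`. -/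
def wProd {G : Type*} [Group G] (m : ℕ) {n : ℕ} (xs : Fin n → G) (y : G) : G :=
  ((List.range 100).map fun k => (List.ofFn xs).prod * y ^ (100 * m + k + 1)).prod

/-- The set of relators of the presentation of `G(𝒜)`. -/
def grpRels (S : IndexedStructure) (p₁ p₂ : ℕ) : Set (FreeGroup (GenSym S.A)) :=
  {FreeGroup.of GenSym.f1 ^ p₁, FreeGroup.of GenSym.f2 ^ p₂,
    chainProd 4000 (FreeGroup.of GenSym.f1) (FreeGroup.of GenSym.f2),
    chainProd 4000 (FreeGroup.of GenSym.f2) (FreeGroup.of GenSym.f1),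
    chainProd 1000 (FreeGroup.of GenSym.b) (FreeGroup.of GenSym.f1),
    chainProd 1000 (FreeGroup.of GenSym.b) (FreeGroup.of GenSym.f2),
    chainProd 2000 (FreeGroup.of GenSym.c) (FreeGroup.of GenSym.f1),
    chainProd 2000 (FreeGroup.of GenSym.c) (FreeGroup.of GenSym.f2),
    chainProd 3000 (FreeGroup.of GenSym.d) (FreeGroup.of GenSym.f1),
    chainProd 3000 (FreeGroup.of GenSym.d) (FreeGroup.of GenSym.f2)}
  ∪ {r | ∃ a : S.A,
      r = chainProd 0 (FreeGroup.of (GenSym.elt a)) (FreeGroup.of GenSym.c) ∨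
      r = chainProd 0 (FreeGroup.of (GenSym.elt a)) (FreeGroup.of GenSym.d)}
  ∪ {r | ∃ m, 1 ≤ m ∧ S.isFunc m ∧ ∃ as : Fin (S.arity m) → S.A,
      r = wProd m (fun i => FreeGroup.of (GenSym.elt (as i))) (FreeGroup.of GenSym.b) *
        (FreeGroup.of (GenSym.elt (S.funcInterp m as)))⁻¹}
  ∪ {r | ∃ m, 1 ≤ m ∧ ¬ S.isFunc m ∧ ∃ as : Fin (S.arity m) → S.A,
      S.relInterp m as ∧
      r = wProd m (fun i => FreeGroup.of (GenSym.elt (as i))) (FreeGroup.of GenSym.b)}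

/-- The group `G(𝒜)`, presented on the generators `GenSym A` with relators `grpRels`. -/
abbrev GA (S : IndexedStructure) (p₁ p₂ : ℕ) : Type :=
  PresentedGroup (grpRels S p₁ p₂)

/-- The image in `G(𝒜)` of a generator. -/
def gen (S : IndexedStructure) (p₁ p₂ : ℕ) (g : GenSym S.A) : GA S p₁ p₂ :=
  PresentedGroup.of g


namespace SC

/-- Inverse letter. -/
def inv {X : Type} (a : X × Bool) : X × Bool := (a.1, !a.2)

@[simp] theorem inv_inv {X : Type} (a : X × Bool) : inv (inv a) = a := by
  simp [inv]

theorem inv_ne {X : Type} (a : X × Bool) : inv a ≠ a := by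
  intro h
  have := congrArg Prod.snd h
  simp [inv] at this

/-- Piece bound for period `L`. -/
def N (L : ℕ) : ℕ := (L - 1) / 6

/-- Line shifted by `t`. -/
def sh {X : Type} (t : ℤ) (ρ : ℤ → X × Bool) : ℤ → X × Bool := fun i => ρ (i + t)

/-- Line traversed backwards. -/
def bar {X : Type} (ρ : ℤ → X × Bool) : ℤ → X × Bool := fun i => inv (ρ (-1 - i))

/-- A system of relator lines satisfying small cancellation. -/
structure LineSys (X : Type) where
  R : (ℤ → X × Bool) → ℕ → Prop
  shift : ∀ {ρ L}, R ρ L → ∀ t, R (sh t ρ) L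
  bar : ∀ {ρ L}, R ρ L → R (bar ρ) L
  per : ∀ {ρ L}, R ρ L → ∀ i, ρ (i + L) = ρ i
  red : ∀ {ρ L}, R ρ L → ∀ i, ρ (i + 1) ≠ inv (ρ i)
  big : ∀ {ρ L}, R ρ L → 13 ≤ L
  piece : ∀ {ρ L σ M}, R ρ L → R σ M → (∀ i : ℕ, i < N L → ρ i = σ i) → ρ = σ ∧ L = M

/-- Partial action graphs. -/
structure Gr (X : Type) where
  V : Type
  E : V → X × Bool → V → Prop
  symm : ∀ {v a w}, E v a w → E w (inv a) v
  det : ∀ {v a w w'}, E v a w → E v a w' → w = w'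

variable {X : Type}

theorem Gr.det' (Γ : Gr X) {v v' w : Γ.V} {a} (h : Γ.E v a w) (h' : Γ.E v' a w) : v = v' :=
  Γ.det (Γ.symm h) (Γ.symm h')

def Closed (Γ : Gr X) (ρ : ℤ → X × Bool) (L : ℕ) (v : Γ.V) : Prop :=
  ∃ q : ℤ → Γ.V, q 0 = v ∧ (∀ t, Γ.E (q t) (ρ t) (q (t + 1))) ∧ ∀ t, q (t + L) = q t

/-- `q` reads `ρ` for `k` steps. -/
def Reads (Γ : Gr X) (ρ : ℤ → X × Bool) (k : ℕ) (q : ℕ → Γ.V) : Prop :=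
  ∀ i : ℕ, i < k → Γ.E (q i) (ρ i) (q (i + 1))

def Path (Γ : Gr X) (ρ : ℤ → X × Bool) (k : ℕ) (v w : Γ.V) : Prop :=
  ∃ q : ℕ → Γ.V, q 0 = v ∧ q k = w ∧ Reads Γ ρ k q

def Good (S : LineSys X) (Γ : Gr X) : Prop :=
  ∀ ρ L, S.R ρ L → ∀ k q, 2 * N L ≤ k → Reads Γ ρ k q → Closed Γ ρ L (q 0)

def Missing (Γ : Gr X) (v : Γ.V) (a : X × Bool) : Prop := ∀ w, ¬ Γ.E v a w

theorem closed_edge {Γ : Gr X} {ρ : ℤ → X × Bool} {L : ℕ} {v : Γ.V} (h : Closed Γ ρ L v) :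
    ∃ w, Γ.E v (ρ 0) w := by
  obtain ⟨q, h0, h1, -⟩ := h
  exact ⟨q (0 + 1), h0 ▸ h1 0⟩

theorem closed_bar {Γ : Gr X} {ρ : ℤ → X × Bool} {L : ℕ} {v : Γ.V} (h : Closed Γ ρ L v) :
    Closed Γ (bar ρ) L v := by
  obtain ⟨q, h0, h1, h2⟩ := h
  refine ⟨fun i => q (-i), by simpa using h0, fun t => ?_, fun t => ?_⟩
  · have := Γ.symm (h1 (-1 - t))
    rw [show (-1 - t + 1 : ℤ) = -t by ring] at this
    simpa [bar, show (-(t + 1) : ℤ) = -1 - t by ring] using this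
  · have := h2 (-(t + L))
    simp only at *
    rw [← this]; congr 1; ring

/-- transfer closedness backwards along a path -/
theorem closed_back {Γ : Gr X} {ρ : ℤ → X × Bool} {L : ℕ} {k : ℕ} {q : ℕ → Γ.V}
    (hq : Reads Γ ρ k q) (h : Closed Γ (sh k ρ) L (q k)) : Closed Γ ρ L (q 0) := by
  obtain ⟨r, h0, h1, h2⟩ := h
  have key : ∀ i : ℕ, i ≤ k → r (-i) = q (k - i) := by
    intro i
    induction i with
    | zero => intro _; simpa using h0
    | succ i ih =>
      intro hi
      have e1 := hq (k - (i + 1)) (by omega)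
      rw [show k - (i + 1) + 1 = k - i by omega, ← ih (by omega)] at e1
      have e2 := h1 (-((i + 1 : ℕ) : ℤ))
      rw [show (-((i + 1 : ℕ) : ℤ) + 1) = -(i : ℤ) by push_cast; ring] at e2
      have : sh (k : ℤ) ρ (-((i + 1 : ℕ) : ℤ)) = ρ ((k - (i + 1) : ℕ) : ℤ) := by
        unfold sh; congr 1; push_cast [Nat.cast_sub hi]; ring
      rw [this] at e2
      exact Γ.det' e2 e1
  refine ⟨fun t => r (t - k), ?_, fun t => ?_, fun t => ?_⟩
  · have := key k le_rfl
    simpa using this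
  · have := h1 (t - k)
    simp only [sh, sub_add_cancel] at this
    rwa [show t - (k : ℤ) + 1 = t + 1 - k by ring] at this
  · have := h2 (t - k)
    simp only
    rw [← this]; congr 1; ring

theorem closed_fwd {Γ : Gr X} {ρ : ℤ → X × Bool} {L : ℕ} {k : ℕ} {q : ℕ → Γ.V}
    (hq : Reads Γ ρ k q) (h : Closed Γ ρ L (q 0)) : Closed Γ (sh k ρ) L (q k) := by
  obtain ⟨r, h0, h1, h2⟩ := h
  have key : ∀ i : ℕ, i ≤ k → r i = q i := by
    intro i
    induction i with
    | zero => intro _; simpa using h0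
    | succ i ih =>
      intro hi
      have e1 := hq i (by omega)
      have e2 := h1 i
      rw [ih (by omega)] at e2
      exact_mod_cast Γ.det e2 e1
  refine ⟨fun t => r (t + k), ?_, fun t => ?_, fun t => ?_⟩
  · simpa using key k le_rfl
  · have := h1 (t + k)
    rwa [show t + (k : ℤ) + 1 = t + 1 + k by ring] at this
  · have := h2 (t + k)
    simp only
    rw [← this]; congr 1; ring

theorem path_rev {Γ : Gr X} {τ τ' : ℤ → X × Bool} {k : ℕ} {v w : Γ.V} (h : Path Γ τ k v w)
    (hτ : ∀ i : ℕ, i < k → τ' i = inv (τ (k - 1 - i))) : Path Γ τ' k w v := by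
  obtain ⟨q, h0, h1, h2⟩ := h
  refine ⟨fun i => q (k - i), by simpa using h1, by simpa using h0, fun i hi => ?_⟩
  have := Γ.symm (h2 (k - (i + 1)) (by omega))
  rw [show k - (i + 1) + 1 = k - i by omega] at this
  rw [hτ i hi]
  convert this using 3
  push_cast [Nat.cast_sub (show i + 1 ≤ k by omega)]; ring

theorem path_unique {Γ : Gr X} {τ : ℤ → X × Bool} {k : ℕ} {q q' : ℕ → Γ.V}
    (h : Reads Γ τ k q) (h' : Reads Γ τ k q') (h0 : q 0 = q' 0) : ∀ i ≤ k, q i = q' i := by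
  intro i
  induction i with
  | zero => intro _; exact h0
  | succ i ih =>
    intro hi
    have e1 := h i (by omega)
    have e2 := h' i (by omega)
    rw [ih (by omega)] at e1
    exact Γ.det e1 e2

theorem per_mul {ρ : ℤ → X × Bool} {L : ℕ} (h : ∀ i, ρ (i + L) = ρ i) (i z : ℤ) :
    ρ (i + L * z) = ρ i := by
  induction z using Int.induction_on with
  | zero => simp
  | succ n ih => rw [← ih, ← h (i + L * n)]; congr 1; ring
  | pred n ih => rw [← ih, ← h (i + L * (-n - 1))]; congr 1; ring

/-- periodic extension -/
theorem closed_of_window {Γ : Gr X} {ρ : ℤ → X × Bool} {L : ℕ} (hL : 0 < L)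
    (hρ : ∀ i, ρ (i + L) = ρ i) (a : ℤ) (ha : a ≤ 0) (ha' : 0 < a + L) (p : ℤ → Γ.V)
    (hp : ∀ t, a ≤ t → t < a + L → Γ.E (p t) (ρ t) (p (t + 1))) (hc : p (a + L) = p a) :
    Closed Γ ρ L (p 0) := by
  refine ⟨fun t => p (a + (t - a) % L), ?_, fun t => ?_, fun t => ?_⟩
  · simp only
    rw [Int.emod_eq_of_lt (by omega) (by omega)]; congr 1; ring
  · have hL' : (0 : ℤ) < L := by exact_mod_cast hL
    have r0 := Int.emod_nonneg (t - a) hL'.ne'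
    have r1 := Int.emod_lt_of_pos (t - a) hL'
    have e := hp (a + (t - a) % L) (by omega) (by omega)
    have hr : ρ (a + (t - a) % L) = ρ t := by
      rw [← per_mul hρ (a + (t - a) % L) ((t - a) / L)]; congr 1
      have := Int.emod_add_mul_ediv (t - a) L
      linarith
    rw [hr] at e
    have hm : (t + 1 - a) % (L : ℤ) = ((t - a) % L + 1) % L := by
      rw [Int.emod_add_emod]; congr 1; ring
    simp only
    rw [hm]
    generalize (t - a) % (L : ℤ) = r at *
    by_cases hlast : r + 1 = L
    · rw [hlast, Int.emod_self, add_zero, ← hc, ← hlast, ← add_assoc]; exact e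
    · rw [Int.emod_eq_of_lt (by omega) (by omega), ← add_assoc]; exact e
  · simp only
    rw [show t + (L : ℤ) - a = (t - a) + L by ring, Int.add_emod_right]

/-- flipped exit line -/
def fl (ρ : ℤ → X × Bool) (K : ℕ) : ℤ → X × Bool := fun i => inv (ρ (-K - 1 - i))

theorem fl_eq (ρ : ℤ → X × Bool) (K : ℕ) : fl ρ K = sh K (bar ρ) := by
  funext i; unfold fl sh bar; congr 2; ring

@[simp] theorem fl_fl (ρ : ℤ → X × Bool) (K : ℕ) : fl (fl ρ K) K = ρ := by
  funext i; unfold fl; rw [inv_inv]; congr 1; ring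

theorem fl_ne {ρ : ℤ → X × Bool} (h : ∀ i, ρ (i + 1) ≠ inv (ρ i)) (K : ℕ) : ρ ≠ fl ρ K := by
  intro he
  rcases Nat.even_or_odd' K with ⟨m, hm | hm⟩
  · have := congrFun he (-m)
    unfold fl at this
    apply h (-m - 1)
    rw [show (-m - 1 + 1 : ℤ) = -m by ring, this]; congr 2; rw [hm]; push_cast; ring
  · have := congrFun he (-m - 1)
    unfold fl at this
    rw [show (-(K : ℤ) - 1 - (-m - 1)) = -m - 1 by rw [hm]; push_cast; ring] at this
    exact inv_ne _ this.symm

open Classical in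
/-- depth of the half-arc -/
noncomputable def ht (ρ : ℤ → X × Bool) (L K : ℕ) : ℕ :=
  if WellOrderingRel ρ (fl ρ K) then (L - K - 1) / 2 else (L - K - 1) - (L - K - 1) / 2

theorem ht_add {ρ : ℤ → X × Bool} (h : ∀ i, ρ (i + 1) ≠ inv (ρ i)) (L K : ℕ) :
    ht ρ L K + ht (fl ρ K) L K = L - K - 1 := by
  unfold ht
  rw [fl_fl]
  have hne := fl_ne h K
  rcases trichotomous_of (WellOrderingRel (α := ℤ → X × Bool)) ρ (fl ρ K) with h1 | h1 | h1
  · rw [if_pos h1, if_neg (asymm h1)]; omega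
  · exact absurd h1 hne
  · rw [if_neg (asymm h1), if_pos h1]; omega

theorem ht_ge (ρ : ℤ → X × Bool) (L K : ℕ) : (L - K - 1) / 2 ≤ ht ρ L K := by
  unfold ht; split_ifs <;> omega

structure Link (S : LineSys X) (Γ : Gr X) (w : Γ.V) (ρ : ℤ → X × Bool) (L K : ℕ) (v : Γ.V) :
    Prop where
  rel : S.R ρ L
  miss : Missing Γ w (ρ 0)
  path : Path Γ (bar ρ) K w v
  miss' : Missing Γ v (bar ρ K)
  small : K < 2 * N L

theorem Link.flip {S : LineSys X} {Γ : Gr X} {w ρ L K v} (h : Link S Γ w ρ L K v) :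
    Link S Γ v (fl ρ K) L K w where
  rel := by rw [fl_eq]; exact S.shift (S.bar h.rel) _
  miss := by
    have := h.miss'
    rw [fl_eq]; simpa [sh] using this
  path := by
    refine path_rev h.path fun i hi => ?_
    simp only [bar, fl, inv_inv]; congr 1; ring
  miss' := by
    have := h.miss
    have e : bar (fl ρ K) K = ρ 0 := by
      simp only [bar, fl, inv_inv]; congr 1; ring
    rwa [e]
  small := h.small

theorem Link.unique {S : LineSys X} {Γ : Gr X} {w ρ L K v L' K' v'} (h : Link S Γ w ρ L K v)
    (h' : Link S Γ w ρ L' K' v') : K = K' ∧ v = v' := by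
  obtain ⟨q, a1, a2, a3⟩ := h.path
  obtain ⟨q', b1, b2, b3⟩ := h'.path
  rcases lt_trichotomy K K' with hlt | heq | hgt
  · have := path_unique a3 (fun i hi => b3 i (by omega)) (a1.trans b1.symm) K le_rfl
    have e := b3 K hlt
    rw [← this, a2] at e
    exact absurd e (h.miss' _)
  · subst heq
    exact ⟨rfl, by rw [← a2, ← b2, path_unique a3 b3 (a1.trans b1.symm) K le_rfl]⟩
  · have := path_unique b3 (fun i hi => a3 i (by omega)) (b1.trans a1.symm) K' le_rfl
    have e := a3 K' hgt
    rw [← this, b2] at e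
    exact absurd e (h'.miss' _)

theorem max_path (Γ : Gr X) (τ : ℤ → X × Bool) (w : Γ.V) (k : ℕ) :
    (∃ q, q 0 = w ∧ Reads Γ τ k q) ∨
      ∃ j < k, ∃ v, Path Γ τ j w v ∧ Missing Γ v (τ j) := by
  induction k with
  | zero => left; exact ⟨fun _ => w, rfl, fun i hi => absurd hi (by omega)⟩
  | succ k ih =>
    rcases ih with ⟨q, h0, h1⟩ | ⟨j, hj, v, h⟩
    · by_cases hm : Missing Γ (q k) (τ k)
      · right; exact ⟨k, by omega, q k, ⟨q, h0, rfl, h1⟩, hm⟩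
      · left
        unfold Missing at hm
        push Not at hm
        obtain ⟨x, hx⟩ := hm
        refine ⟨fun i => if i ≤ k then q i else x, by simpa using h0, fun i hi => ?_⟩
        by_cases hik : i < k
        · simp only [show i ≤ k by omega, show i + 1 ≤ k by omega, if_true]; exact h1 i hik
        · obtain rfl : i = k := by omega
          simpa using hx
    · right; exact ⟨j, by omega, v, h⟩

theorem exists_link {S : LineSys X} {Γ : Gr X} (hG : Good S Γ) {w ρ L} (hρ : S.R ρ L)
    (hm : Missing Γ w (ρ 0)) : ∃ K v, Link S Γ w ρ L K v := by
  rcases max_path Γ (bar ρ) w (2 * N L) with ⟨q, h0, h1⟩ | ⟨K, hK, v, h1, h2⟩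
  · exfalso
    have hc := closed_bar (hG _ _ (S.bar hρ) _ q le_rfl h1)
    have : bar (bar ρ) = ρ := by
      funext i; simp only [bar, inv_inv]; congr 1; ring
    rw [this, h0] at hc
    obtain ⟨x, hx⟩ := closed_edge hc
    exact hm x hx
  · exact ⟨K, v, hρ, hm, h1, h2, hK⟩

theorem Link.bounds {S : LineSys X} {Γ : Gr X} {w ρ L K v} (h : Link S Γ w ρ L K v) :
    2 ≤ N L ∧ 2 * N L ≤ ht ρ L K ∧ ht ρ L K + ht (fl ρ K) L K + 1 + K = L ∧
    2 * N L ≤ ht (fl ρ K) L K := by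
  have h1 := S.big h.rel
  have h2 := h.small
  have h3 := ht_add (S.red h.rel) L K
  have h4 := ht_ge ρ L K
  have h5 := ht_ge (fl ρ K) L K
  unfold N at *
  omega

/-- reversed initial word of a line -/
def rw' (ρ : ℤ → X × Bool) : ℕ → List (X × Bool)
  | 0 => []
  | j + 1 => ρ j :: rw' ρ j

@[simp] theorem rw'_length (ρ : ℤ → X × Bool) (j : ℕ) : (rw' ρ j).length = j := by
  induction j with
  | zero => rfl
  | succ j ih => simp [rw', ih]

theorem rw'_inj {ρ σ : ℤ → X × Bool} {j k : ℕ} (h : rw' ρ j = rw' σ k) :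
    j = k ∧ ∀ i : ℕ, i < j → ρ i = σ i := by
  have hl := congrArg List.length h
  simp at hl
  subst hl
  refine ⟨rfl, ?_⟩
  induction j with
  | zero => intro i hi; omega
  | succ j ih =>
    simp only [rw', List.cons.injEq] at h
    intro i hi
    by_cases hij : i = j
    · subst hij; exact h.1
    · exact ih h.2 i (by omega)

end SC


namespace SC
variable {X : Type}

/-- Valid nonempty addresses. -/
def Addr (S : LineSys X) (Γ : Gr X) (w : Γ.V) (u : List (X × Bool)) : Prop :=
  (∃ a, u = [a] ∧ Missing Γ w a) ∨
  ∃ ρ L K v j, Link S Γ w ρ L K v ∧ 1 ≤ j ∧ j ≤ ht ρ L K ∧ u = rw' ρ j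

def Old (Γ : Gr X) (x : Γ.V × List (X × Bool)) (a : X × Bool) (y : Γ.V × List (X × Bool)) :
    Prop := x.2 = [] ∧ y.2 = [] ∧ Γ.E x.1 a y.1

def Down (S : LineSys X) (Γ : Gr X) (x : Γ.V × List (X × Bool)) (a : X × Bool)
    (y : Γ.V × List (X × Bool)) : Prop := x.1 = y.1 ∧ y.2 = a :: x.2 ∧ Addr S Γ x.1 y.2

def Up (S : LineSys X) (Γ : Gr X) (x : Γ.V × List (X × Bool)) (a : X × Bool)
    (y : Γ.V × List (X × Bool)) : Prop := x.1 = y.1 ∧ x.2 = inv a :: y.2 ∧ Addr S Γ x.1 x.2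

def Conn (S : LineSys X) (Γ : Gr X) (x : Γ.V × List (X × Bool)) (a : X × Bool)
    (y : Γ.V × List (X × Bool)) : Prop :=
  ∃ ρ L K, Link S Γ x.1 ρ L K y.1 ∧ x.2 = rw' ρ (ht ρ L K) ∧ a = ρ (ht ρ L K) ∧
    y.2 = rw' (fl ρ K) (ht (fl ρ K) L K)

def E' (S : LineSys X) (Γ : Gr X) (x : Γ.V × List (X × Bool)) (a : X × Bool)
    (y : Γ.V × List (X × Bool)) : Prop :=
  Old Γ x a y ∨ Down S Γ x a y ∨ Up S Γ x a y ∨ Conn S Γ x a y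

variable {S : LineSys X} {Γ : Gr X}

theorem Link.cut {w ρ L K v} (h : Link S Γ w ρ L K v) :
    fl ρ K (ht (fl ρ K) L K) = inv (ρ (ht ρ L K)) := by
  have hb := h.bounds.2.2.1
  unfold fl
  rw [← S.per h.rel]
  congr 2
  unfold fl at hb
  omega

theorem addr_deep {w ρ L K v j a} (h : Link S Γ w ρ L K v) (hj : N L ≤ j)
    (ha : Addr S Γ w (a :: rw' ρ j)) : a = ρ j ∧ j + 1 ≤ ht ρ L K := by
  have hb := h.bounds
  rcases ha with ⟨b, hb', -⟩ | ⟨ρ', L', K', v', j', h', h1, h2, h3⟩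
  · have := congrArg List.length hb'
    simp at this; omega
  · obtain ⟨i, rfl⟩ : ∃ i, j' = i + 1 := ⟨j' - 1, by omega⟩
    simp only [rw', List.cons.injEq] at h3
    obtain ⟨e1, e2⟩ := h3
    obtain ⟨rfl, e3⟩ := rw'_inj e2
    obtain ⟨rfl, rfl⟩ := S.piece h.rel h'.rel fun i hi => e3 i (by omega)
    obtain ⟨rfl, rfl⟩ := h.unique h'
    exact ⟨e1, h2⟩

theorem link_deep {w ρ L K v j ρ' L' K' v' j'} (h : Link S Γ w ρ L K v) (hj : N L ≤ j)
    (h' : Link S Γ w ρ' L' K' v') (he : rw' ρ j = rw' ρ' j') :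
    ρ = ρ' ∧ L = L' ∧ K = K' ∧ v = v' ∧ j = j' := by
  obtain ⟨rfl, e3⟩ := rw'_inj he
  obtain ⟨rfl, rfl⟩ := S.piece h.rel h'.rel fun i hi => e3 i (by omega)
  obtain ⟨rfl, rfl⟩ := h.unique h'
  simp

theorem addr_red {w a u} (h : Addr S Γ w (a :: inv a :: u)) : False := by
  rcases h with ⟨b, hb', -⟩ | ⟨ρ', L', K', v', j', h', h1, h2, h3⟩
  · simp at hb'
  · match j', h3 with
    | 0, h3 => simp [rw'] at h3
    | 1, h3 => simp [rw'] at h3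
    | j + 2, h3 =>
      simp only [rw', List.cons.injEq] at h3
      apply S.red h'.rel j
      rw [← h3.2.1, inv_inv, h3.1]; push_cast; rfl

theorem addr_single {w a} (h : Addr S Γ w [a]) : Missing Γ w a := by
  rcases h with ⟨b, hb', h⟩ | ⟨ρ', L', K', v', j', h', h1, h2, h3⟩
  · simp at hb'; subst hb'; exact h
  · match j', h3 with
    | 0, h3 => simp [rw'] at h3
    | 1, h3 =>
      simp [rw'] at h3
      rw [h3]; exact h'.miss
    | j + 2, h3 => simp [rw'] at h3

theorem conn_ne_nil {x y : Γ.V × List (X × Bool)} {a} (h : Conn S Γ x a y) : x.2 ≠ [] := by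
  obtain ⟨ρ, L, K, hl, h1, -, -⟩ := h
  have := hl.bounds
  intro h0
  rw [h0] at h1
  have := congrArg List.length h1
  simp at this; omega

theorem conn_symm {x y : Γ.V × List (X × Bool)} {a} (h : Conn S Γ x a y) :
    Conn S Γ y (inv a) x := by
  obtain ⟨ρ, L, K, hl, h1, h2, h3⟩ := h
  refine ⟨fl ρ K, L, K, hl.flip, h3, ?_, ?_⟩
  · rw [h2, hl.cut]
  · rw [fl_fl]; exact h1

theorem not_down_conn {x y z : Γ.V × List (X × Bool)} {a} (h : Down S Γ x a y)
    (h' : Conn S Γ x a z) : False := by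
  obtain ⟨ρ, L, K, hl, h1, h2, h3⟩ := h'
  obtain ⟨e1, e2, e3⟩ := h
  have := hl.bounds
  rw [e2, h1] at e3
  have := addr_deep hl (by omega) e3
  omega

theorem not_up_conn {x y z : Γ.V × List (X × Bool)} {a} (h : Up S Γ x a y)
    (h' : Conn S Γ x a z) : False := by
  obtain ⟨ρ, L, K, hl, h1, h2, h3⟩ := h'
  obtain ⟨e1, e2, e3⟩ := h
  have := hl.bounds
  rw [e2] at h1
  obtain ⟨i, hi⟩ : ∃ i, ht ρ L K = i + 1 := ⟨ht ρ L K - 1, by omega⟩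
  rw [hi] at h1 h2
  simp only [rw', List.cons.injEq] at h1
  apply S.red hl.rel i
  rw [← h1.1, inv_inv, h2]; push_cast; rfl

theorem E'_det {x y z : Γ.V × List (X × Bool)} {a} (h : E' S Γ x a y) (h' : E' S Γ x a z) :
    y = z := by
  have aux : ∀ {x y z : Γ.V × List (X × Bool)} {a}, Old Γ x a y → Down S Γ x a z → False := by
    rintro x y z a ⟨h1, h2, h3⟩ ⟨e1, e2, e3⟩
    rw [e2, h1] at e3
    exact addr_single e3 _ h3
  have aux2 : ∀ {x y z : Γ.V × List (X × Bool)} {a}, Old Γ x a y → Up S Γ x a z → False := by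
    rintro x y z a ⟨h1, h2, h3⟩ ⟨e1, e2, e3⟩
    rw [h1] at e2; simp at e2
  have aux3 : ∀ {x y z : Γ.V × List (X × Bool)} {a}, Down S Γ x a y → Up S Γ x a z → False := by
    rintro x y z a ⟨h1, h2, h3⟩ ⟨e1, e2, e3⟩
    rw [h2, e2] at h3
    exact addr_red h3
  rcases h with h | h | h | h <;> rcases h' with h' | h' | h' | h'
  · exact Prod.ext (Γ.det h.2.2 h'.2.2) (h.2.1.trans h'.2.1.symm)
  · exact (aux h h').elim
  · exact (aux2 h h').elim
  · exact absurd h.1 (conn_ne_nil h')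
  · exact (aux h' h).elim
  · exact Prod.ext (h.1.symm.trans h'.1) (h.2.1.trans h'.2.1.symm)
  · exact (aux3 h h').elim
  · exact (not_down_conn h h').elim
  · exact (aux2 h' h).elim
  · exact (aux3 h' h).elim
  · refine Prod.ext (h.1.symm.trans h'.1) ?_
    have := h.2.1.symm.trans h'.2.1
    simpa using this
  · exact (not_up_conn h h').elim
  · exact absurd h'.1 (conn_ne_nil h)
  · exact (not_down_conn h' h).elim
  · exact (not_up_conn h' h).elim
  · obtain ⟨ρ, L, K, hl, h1, h2, h3⟩ := h
    obtain ⟨ρ', L', K', hl', h1', h2', h3'⟩ := h'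
    obtain ⟨rfl, rfl, rfl, e, -⟩ := link_deep hl (by have := hl.bounds; omega) hl' (h1.symm.trans h1')
    exact Prod.ext e (h3.trans h3'.symm)

theorem E'_symm {x y : Γ.V × List (X × Bool)} {a} (h : E' S Γ x a y) : E' S Γ y (inv a) x := by
  rcases h with h | h | h | h
  · exact Or.inl ⟨h.2.1, h.1, Γ.symm h.2.2⟩
  · exact Or.inr (Or.inr (Or.inl ⟨h.1.symm, by rw [inv_inv]; exact h.2.1, h.1 ▸ h.2.2⟩))
  · exact Or.inr (Or.inl ⟨h.1.symm, h.2.1, h.1 ▸ h.2.2⟩)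
  · exact Or.inr (Or.inr (Or.inr (conn_symm h)))

/-- The extended graph. -/
def nxt (S : LineSys X) (Γ : Gr X) : Gr X where
  V := Γ.V × List (X × Bool)
  E := E' S Γ
  symm := E'_symm
  det := E'_det

theorem closed_lift {ρ : ℤ → X × Bool} {L v} (h : Closed Γ ρ L v) :
    Closed (nxt S Γ) ρ L ((v, []) : Γ.V × List (X × Bool)) := by
  obtain ⟨q, h0, h1, h2⟩ := h
  exact ⟨fun t => (q t, []), by simp only [h0]; rfl, fun t => Or.inl ⟨rfl, rfl, h1 t⟩,
    fun t => by simp only [h2]; rfl⟩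

theorem addr_rw {w ρ L K v j} (h : Link S Γ w ρ L K v) (hj : 1 ≤ j) (hj' : j ≤ ht ρ L K) :
    Addr S Γ w (rw' ρ j) := Or.inr ⟨ρ, L, K, v, j, h, hj, hj', rfl⟩

theorem closed_exit {w ρ L K v} (h : Link S Γ w ρ L K v) :
    Closed (nxt S Γ) ρ L ((w, []) : Γ.V × List (X × Bool)) := by
  obtain ⟨p, p0, pK, hp⟩ := h.path
  obtain ⟨b1, b2, b3, b4⟩ := h.bounds
  set m := ht ρ L K with hm
  set m' := ht (fl ρ K) L K with hm'
  let q : ℤ → (nxt S Γ).V := fun t =>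
    if t ≤ 0 then ((p (-t).toNat, []) : Γ.V × List (X × Bool))
    else if t ≤ m then (w, rw' ρ t.toNat) else (v, rw' (fl ρ K) (L - K - t).toNat)
  have hq0 : q 0 = ((w, []) : Γ.V × List (X × Bool)) := by simp [q, p0]; rfl
  rw [← hq0]
  refine closed_of_window (by omega) (S.per h.rel) (-K) (by omega) (by omega) q ?_ ?_
  · intro t ht1 ht2
    by_cases c1 : t < 0
    · left
      have e := Γ.symm (hp (-(t + 1)).toNat (by omega))
      have e1 : inv (bar ρ ((-(t + 1)).toNat : ℕ)) = ρ t := by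
        simp only [bar, inv_inv]; congr 1; omega
      rw [e1, show (-(t + 1)).toNat + 1 = (-t).toNat by omega] at e
      simp only [q, show t ≤ 0 by omega, show t + 1 ≤ 0 by omega, if_true]
      exact ⟨rfl, rfl, e⟩
    by_cases c2 : t < m
    · obtain ⟨n, rfl⟩ := Int.eq_ofNat_of_zero_le (show 0 ≤ t by omega)
      right; left
      have hqn : q (n : ℤ) = ((w, rw' ρ n) : Γ.V × List (X × Bool)) := by
        rcases Nat.eq_zero_or_pos n with rfl | hn
        · simpa [rw'] using hq0
        · simp only [q, show ¬ (n : ℤ) ≤ 0 by omega, show (n : ℤ) ≤ m by omega, if_true, if_false]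
          simp; rfl
      have hqn' : q ((n : ℤ) + 1) = ((w, rw' ρ (n + 1)) : Γ.V × List (X × Bool)) := by
        simp only [q, show ¬ (n : ℤ) + 1 ≤ 0 by omega, show (n : ℤ) + 1 ≤ m by omega, if_true,
          if_false]
        congr 1
      rw [hqn, hqn']
      exact ⟨rfl, rfl, addr_rw h (by omega) (by omega)⟩
    by_cases c3 : t = m
    · right; right; right
      subst c3
      simp only [q, show ¬ (m : ℤ) ≤ 0 by omega, show ¬ (m : ℤ) + 1 ≤ 0 by omega,
        show ¬ (m : ℤ) + 1 ≤ m by omega, le_refl, if_true, if_false]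
      refine ⟨ρ, L, K, h, by simp [hm], rfl, ?_⟩
      show rw' _ _ = rw' _ _
      congr 1
      omega
    · right; right; left
      simp only [q, show ¬ t ≤ 0 by omega, show ¬ t + 1 ≤ 0 by omega,
        show ¬ t ≤ m by omega, show ¬ t + 1 ≤ m by omega, if_false]
      refine ⟨rfl, ?_, addr_rw h.flip (by omega) (by omega)⟩
      show rw' _ _ = _ :: rw' _ _
      rw [show ((L : ℤ) - K - t).toNat = ((L : ℤ) - K - (t + 1)).toNat + 1 by omega]
      simp only [rw']
      congr 1
      unfold fl
      rw [← S.per h.rel]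
      congr 2
      omega
  · simp only [q, show ¬ (-K + L : ℤ) ≤ 0 by omega, show ¬ (-K + L : ℤ) ≤ m by omega,
      show (-K : ℤ) ≤ 0 by omega, if_true, if_false]
    rw [show ((L : ℤ) - K - (-K + L)).toNat = 0 by omega]
    simp [rw', pK]; rfl

theorem closed_old (hG : Good S Γ) {ρ L} (hρ : S.R ρ L) (v : Γ.V) :
    Closed (nxt S Γ) ρ L ((v, []) : Γ.V × List (X × Bool)) := by
  rcases max_path Γ ρ v (2 * N L) with ⟨q, h0, h1⟩ | ⟨K, hK, w, ⟨q, h0, h1, h2⟩, h3⟩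
  · have := hG _ _ hρ _ q le_rfl h1
    rw [h0] at this
    exact closed_lift this
  · obtain ⟨K', v', hl⟩ := exists_link hG (S.shift hρ K) (w := w) (by simpa [sh] using h3)
    have := closed_exit hl
    have hr : Reads (nxt S Γ) ρ K (fun i => ((q i, []) : Γ.V × List (X × Bool))) :=
      fun i hi => Or.inl ⟨rfl, rfl, h2 i hi⟩
    have := closed_back hr (L := L) (by simp only [h1]; exact this)
    simpa only [h0] using this

theorem closed_arc {w ρ L K v j} (h : Link S Γ w ρ L K v) (hj : j ≤ ht ρ L K) :
    Closed (nxt S Γ) (sh j ρ) L ((w, rw' ρ j) : Γ.V × List (X × Bool)) := by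
  have hr : Reads (nxt S Γ) ρ j (fun i => ((w, rw' ρ i) : Γ.V × List (X × Bool))) :=
    fun i hi => Or.inr (Or.inl ⟨rfl, rfl, addr_rw h (by omega) (by omega)⟩)
  exact closed_fwd hr (L := L) (closed_exit h)

end SC


namespace SC
variable {X : Type} {S : LineSys X} {Γ : Gr X}

theorem down_chain {τ ρ : ℤ → X × Bool} {w : Γ.V} {q : ℕ → Γ.V × List (X × Bool)} (c : ℕ) :
    ∀ h, (∀ i < c, Down S Γ (q i) (τ i) (q (i + 1))) → q c = (w, rw' ρ h) →
    c ≤ h ∧ q 0 = (w, rw' ρ (h - c)) ∧ ∀ i : ℕ, i < c → τ i = ρ (h - c + i) := by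
  induction c with
  | zero => intro h _ h2; exact ⟨by omega, h2, fun i hi => by omega⟩
  | succ c ih =>
    intro h h1 h2
    obtain ⟨d1, d2, -⟩ := h1 c (by omega)
    rw [h2] at d1 d2
    cases h with
    | zero => simp [rw'] at d2
    | succ h =>
      simp only [rw', List.cons.injEq] at d2
      obtain ⟨i1, i2, i3⟩ := ih h (fun i hi => h1 i (by omega)) (Prod.ext d1 d2.2.symm)
      refine ⟨by omega, by rw [i2]; congr 2; omega, fun i hi => ?_⟩
      by_cases hic : i = c
      · subst hic; rw [← d2.1]; congr 1; push_cast; ring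
      · rw [i3 i (by omega)]; congr 1; push_cast; ring

theorem up_chain {τ ρ : ℤ → X × Bool} {q : ℕ → Γ.V × List (X × Bool)} {h : ℕ} (c : ℕ)
    (h1 : ∀ i < c, Up S Γ (q i) (τ i) (q (i + 1))) (h2 : (q 0).2 = rw' ρ h) :
    c ≤ h ∧ (q c).2 = rw' ρ (h - c) ∧ ∀ i : ℕ, i < c → τ i = inv (ρ (h - 1 - i)) := by
  induction c with
  | zero => exact ⟨by omega, h2, fun i hi => by omega⟩
  | succ c ih =>
    obtain ⟨i1, i2, i3⟩ := ih fun i hi => h1 i (by omega)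
    obtain ⟨d1, d2, -⟩ := h1 c (by omega)
    rw [i2] at d2
    obtain ⟨g, hg⟩ | hg : (∃ g, h - c = g + 1) ∨ h - c = 0 := by
      rcases Nat.eq_zero_or_pos (h - c) with h3 | h3
      · right; exact h3
      · left; exact ⟨h - c - 1, by omega⟩
    · rw [hg] at d2
      simp only [rw', List.cons.injEq] at d2
      refine ⟨by omega, by rw [← d2.2]; congr 1; omega, fun i hi => ?_⟩
      by_cases hic : i = c
      · subst hic; rw [show (h : ℤ) - 1 - i = g by omega, d2.1, inv_inv]
      · exact i3 i (by omega)
    · rw [hg] at d2; simp [rw'] at d2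

theorem down_not_up {x y z : Γ.V × List (X × Bool)} {a b} (h : Down S Γ x a y) (h' : Up S Γ y b z)
    (hab : b ≠ inv a) : False := by
  obtain ⟨-, h1, -⟩ := h
  obtain ⟨-, h2, -⟩ := h'
  rw [h1] at h2
  simp only [List.cons.injEq] at h2
  apply hab; rw [h2.1, inv_inv]

theorem edge_cases {x y : Γ.V × List (X × Bool)} {a} (h : E' S Γ x a y) (hx : x.2 ≠ []) :
    Down S Γ x a y ∨ Up S Γ x a y ∨ Conn S Γ x a y := by
  rcases h with h | h
  · exact absurd h.1 hx
  · exact h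

theorem bar_shift (S : LineSys X) {ρ : ℤ → X × Bool} {L} (h : S.R ρ L) (j : ℤ) :
    S.R (SC.bar (sh j ρ)) L := S.bar (S.shift h j)

theorem conn_chain {τ ρ : ℤ → X × Bool} {M L K : ℕ} {w v : Γ.V} (hτ : S.R τ M)
    {q : ℕ → Γ.V × List (X × Bool)} {k c : ℕ} (hq : ∀ i < k, E' S Γ (q i) (τ i) (q (i + 1)))
    (hne : ∀ i ≤ k, (q i).2 ≠ []) (hl : Link S Γ w ρ L K v)
    (hc : q (c + 1) = (v, rw' (fl ρ K) (ht (fl ρ K) L K))) (hτc : τ c = ρ (ht ρ L K)) (i : ℕ) :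
    i ≤ N L → c + 1 + i ≤ k →
    q (c + 1 + i) = (v, rw' (fl ρ K) (ht (fl ρ K) L K - i)) ∧
      ∀ t ≤ i, τ ((c + t : ℕ) : ℤ) = ρ (ht ρ L K + t) := by
  obtain ⟨b1, b2, b3, b4⟩ := hl.bounds
  generalize hh : ht ρ L K = h at *
  generalize hh' : ht (fl ρ K) L K = h' at *
  induction i with
  | zero =>
    intro _ _
    refine ⟨by simpa using hc, fun t ht => ?_⟩
    obtain rfl : t = 0 := by omega
    simpa using hτc
  | succ i ih =>
    intro h1 h2
    obtain ⟨e1, e2⟩ := ih (by omega) (by omega)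
    have hlast := e2 i le_rfl
    have hred : τ ((c + 1 + i : ℕ) : ℤ) ≠ inv (τ ((c + i : ℕ) : ℤ)) := by
      have := S.red hτ ((c + i : ℕ) : ℤ)
      rwa [show ((c + i : ℕ) : ℤ) + 1 = ((c + 1 + i : ℕ) : ℤ) by push_cast; ring] at this
    have hfl : fl ρ K ((h' - i : ℕ) : ℤ) = inv (ρ (h + i)) := by
      unfold fl
      rw [← S.per hl.rel]
      congr 2
      omega
    rcases edge_cases (hq (c + 1 + i) (by omega)) (hne _ (by omega)) with hd | hu | hcn
    · exfalso
      obtain ⟨d1, d2, d3⟩ := hd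
      rw [d2, e1] at d3
      have := addr_deep hl.flip (by omega) d3
      rw [hfl, ← hlast] at this
      exact hred this.1
    · obtain ⟨d1, d2, d3⟩ := hu
      rw [e1] at d1 d2
      simp only at d1 d2
      rw [show h' - i = (h' - (i + 1)) + 1 by omega] at d2
      simp only [rw', List.cons.injEq] at d2
      refine ⟨Prod.ext d1.symm d2.2.symm, fun t ht => ?_⟩
      by_cases hti : t = i + 1
      · subst hti
        have := congrArg inv d2.1
        rw [inv_inv] at this
        rw [show ((c + (i + 1) : ℕ) : ℤ) = ((c + 1 + i : ℕ) : ℤ) by push_cast; ring, ← this]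
        unfold fl
        rw [inv_inv, ← S.per hl.rel]
        congr 1
        omega
      · exact e2 t (by omega)
    · exfalso
      obtain ⟨ρ', L', K', hl', d1, d2, d3⟩ := hcn
      rw [e1] at hl' d1
      obtain ⟨rfl, rfl, rfl, -, e⟩ := link_deep hl.flip (by omega) hl' d1
      rw [← e, hfl, ← hlast] at d2
      exact hred d2

theorem lemY {τ : ℤ → X × Bool} {M : ℕ} (hτ : S.R τ M)
    {q : ℕ → Γ.V × List (X × Bool)} {k : ℕ} (hk : N M ≤ k)
    (hq : ∀ i < k, E' S Γ (q i) (τ i) (q (i + 1)))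
    (hne : ∀ i ≤ k, (q i).2 ≠ []) (h0 : ¬ Up S Γ (q 0) (τ 0) (q 1)) :
    Closed (nxt S Γ) τ M (q 0 : Γ.V × List (X × Bool)) := by
  have hM : 2 ≤ N M := by have := S.big hτ; unfold N; omega
  by_cases hall : ∀ i < N M, Down S Γ (q i) (τ i) (q (i + 1))
  · obtain ⟨n, hn⟩ : ∃ n, N M = n + 1 := ⟨N M - 1, by omega⟩
    obtain ⟨d1, d2, d3⟩ := hall n (by omega)
    rw [← hn] at d1 d2 d3
    rcases d3 with ⟨a, ha, -⟩ | ⟨ρ, L, K, v, j, hl, hj1, hj2, hj3⟩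
    · exfalso
      rw [ha] at d2
      simp at d2
      exact hne n (by omega) d2.2
    · obtain ⟨e1, e2, e3⟩ := down_chain (N M) j hall (Prod.ext rfl hj3)
      have hp : τ = sh ((j - N M : ℕ) : ℤ) ρ ∧ M = L := by
        refine S.piece hτ (S.shift hl.rel _) fun i hi => ?_
        rw [e3 i hi]; unfold sh; congr 1; omega
      obtain ⟨hp1, rfl⟩ := hp
      rw [d1] at hl
      rw [e2, hp1]
      exact closed_arc hl (by omega)
  · have hex : ∃ c, c < N M ∧ ¬ Down S Γ (q c) (τ c) (q (c + 1)) := by push Not at hall; exact hall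
    classical
    obtain ⟨c, ⟨hc1, hc2⟩, hmin⟩ : ∃ c, (c < N M ∧ ¬ Down S Γ (q c) (τ c) (q (c + 1))) ∧
        ∀ i < c, Down S Γ (q i) (τ i) (q (i + 1)) := by
      refine ⟨Nat.find hex, Nat.find_spec hex, fun i hi => ?_⟩
      have h1 := Nat.find_min hex hi
      have h2 := (Nat.find_spec hex).1
      by_contra h3
      exact h1 ⟨by omega, h3⟩
    have hconn : Conn S Γ (q c) (τ c) (q (c + 1)) := by
      rcases edge_cases (hq c (by omega)) (hne _ (by omega)) with hd | hu | hcn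
      · exact absurd hd hc2
      · exfalso
        cases c with
        | zero => exact h0 (by simpa using hu)
        | succ c =>
          refine down_not_up (hmin c (by omega)) hu ?_
          have := S.red hτ c
          exact_mod_cast this
      · exact hcn
    obtain ⟨ρ, L, K, hl, d1, d2, d3⟩ := hconn
    obtain ⟨e1, e2, e3⟩ := down_chain c (ht ρ L K) hmin (Prod.ext rfl d1)
    have hag : ∀ i : ℕ, i < k → i < c + 1 + N L →
        τ i = sh ((ht ρ L K - c : ℕ) : ℤ) ρ i := by
      intro i hi1 hi2
      by_cases hic : i < c
      · rw [e3 i hic]; unfold sh; congr 1; omega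
      · have := (conn_chain hτ hq hne hl (Prod.ext rfl d3) d2 (i - c) (by omega) (by omega)).2 (i - c)
          le_rfl
        rw [show c + (i - c) = i by omega] at this
        rw [this]; unfold sh; congr 1; omega
    have hp : τ = sh ((ht ρ L K - c : ℕ) : ℤ) ρ ∧ M = L := by
      by_cases hh : N M ≤ c + 1 + N L
      · exact S.piece hτ (S.shift hl.rel _) fun i hi => hag i (by omega) (by omega)
      · have := S.piece (S.shift hl.rel ((ht ρ L K - c : ℕ) : ℤ)) hτ
          fun i hi => (hag i (by omega) (by omega)).symm
        exact ⟨this.1.symm, this.2.symm⟩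
    obtain ⟨hp1, rfl⟩ := hp
    rw [e2, hp1]
    exact closed_arc hl (by omega)

theorem good_nxt (hG : Good S Γ) : Good S (nxt S Γ) := by
  intro τ M hτ k q hk hr
  have hM : 2 ≤ N M := by have := S.big hτ; unfold N; omega
  change ℕ → Γ.V × List (X × Bool) at q
  by_cases hnil : ∃ i ≤ k, (q i).2 = []
  · obtain ⟨i, hi, hi2⟩ := hnil
    refine closed_back (k := i) (fun t ht => hr t (by omega)) ?_
    have := closed_old hG (S.shift hτ i) (q i).1
    rw [← hi2] at this
    exact this
  push Not at hnil
  have hq : ∀ i < k, E' S Γ (q i) (τ i) (q (i + 1)) := hr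
  by_cases hall : ∀ i < N M, Up S Γ (q i) (τ i) (q (i + 1))
  · obtain ⟨d1, d2, d3⟩ := hall 0 (by omega)
    rcases d3 with ⟨a, ha, -⟩ | ⟨ρ, L, K, v, j, hl, hj1, hj2, hj3⟩
    · exfalso
      rw [ha] at d2
      simp at d2
      exact hnil 1 (by omega) d2.2
    · obtain ⟨e1, e2, e3⟩ := up_chain (N M) hall hj3
      have hp : τ = bar (sh j ρ) ∧ M = L := by
        refine S.piece hτ (bar_shift S hl.rel j) fun i hi => ?_
        rw [e3 i hi]; unfold bar sh; congr 2; ring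
      obtain ⟨hp1, rfl⟩ := hp
      rw [hp1]
      apply closed_bar
      have := closed_arc hl hj2
      rw [← hj3] at this
      exact this
  · push Not at hall
    obtain ⟨c, hc, hcu⟩ := hall
    refine closed_back (k := c) (fun t ht => hr t (by omega)) ?_
    refine lemY (S.shift hτ c) (q := fun i => q (c + i)) (k := k - c) (by omega) ?_ ?_ ?_
    · intro i hi
      have := hq (c + i) (by omega)
      unfold sh
      rw [show (i : ℤ) + c = ((c + i : ℕ) : ℤ) by push_cast; ring]
      exact this
    · intro i hi; exact hnil _ (by omega)
    · simpa [sh] using hcu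

end SC


namespace SC
variable {X : Type}

/-- The one-vertex graph without edges. -/
def gr0 (X : Type) : Gr X where
  V := Unit
  E := fun _ _ _ => False
  symm := fun h => h
  det := fun h => h.elim

def tower (S : LineSys X) : ℕ → Gr X
  | 0 => gr0 X
  | n + 1 => nxt S (tower S n)

theorem tower_good (S : LineSys X) (n : ℕ) : Good S (tower S n) := by
  induction n with
  | zero =>
    intro ρ L h k q hk hr
    have := S.big h
    exact (hr 0 (by unfold N at hk; omega)).elim
  | succ n ih => exact good_nxt ih

def emb (S : LineSys X) : ∀ n, (tower S n).V → ℕ → List (X × Bool)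
  | 0 => fun _ _ => []
  | n + 1 => fun (x : (tower S n).V × List (X × Bool)) => Function.update (emb S n x.1) n x.2

theorem emb_supp (S : LineSys X) (n : ℕ) : ∀ v k, n ≤ k → emb S n v k = [] := by
  induction n with
  | zero => intro v k _; rfl
  | succ n ih =>
    intro v k hk
    show Function.update (emb S n v.1) n v.2 k = []
    rw [Function.update_of_ne (by omega)]
    exact ih _ _ (by omega)

theorem emb_inj (S : LineSys X) (n : ℕ) : Function.Injective (emb S n) := by
  induction n with
  | zero => intro v w _; rfl
  | succ n ih =>
    intro v w h
    change Function.update (emb S n v.1) n v.2 = Function.update (emb S n w.1) n w.2 at h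
    refine Prod.ext (ih ?_) ?_
    · funext k
      by_cases hk : k = n
      · subst hk; rw [emb_supp _ _ _ _ le_rfl, emb_supp _ _ _ _ le_rfl]
      · have := congrFun h k
        rwa [Function.update_of_ne hk, Function.update_of_ne hk] at this
    · have := congrFun h n
      simpa using this

theorem emb_succ (S : LineSys X) (n : ℕ) (v : (tower S n).V) :
    emb S (n + 1) ((v, []) : (tower S n).V × List (X × Bool)) = emb S n v := by
  show Function.update (emb S n v) n [] = _
  rw [← emb_supp S n v n le_rfl, Function.update_eq_self]

def EU (S : LineSys X) (n : ℕ) (x : ℕ → List (X × Bool)) (a : X × Bool)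
    (y : ℕ → List (X × Bool)) : Prop :=
  ∃ v w, emb S n v = x ∧ emb S n w = y ∧ (tower S n).E v a w

theorem EU_mono (S : LineSys X) {n m : ℕ} (h : n ≤ m) {x a y} (hx : EU S n x a y) :
    EU S m x a y := by
  induction h with
  | refl => exact hx
  | step _ ih =>
    obtain ⟨v, w, h1, h2, h3⟩ := ih
    exact ⟨((v, []) : _ × List (X × Bool)), ((w, []) : _ × List (X × Bool)),
      (emb_succ _ _ _).trans h1, (emb_succ _ _ _).trans h2, Or.inl ⟨rfl, rfl, h3⟩⟩

/-- The limit graph. -/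
def lim (S : LineSys X) : Gr X where
  V := {x : ℕ → List (X × Bool) // ∃ n v, emb S n v = x}
  E := fun x a y => ∃ n, EU S n x.1 a y.1
  symm := by
    rintro v a w ⟨n, x, y, h1, h2, h3⟩
    exact ⟨n, y, x, h2, h1, (tower S n).symm h3⟩
  det := by
    rintro v a w w' ⟨n, hn⟩ ⟨m, hm⟩
    obtain ⟨x, y, h1, h2, h3⟩ := EU_mono S (le_max_left n m) hn
    obtain ⟨x', y', h1', h2', h3'⟩ := EU_mono S (le_max_right n m) hm
    obtain rfl := emb_inj _ _ (h1.trans h1'.symm)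
    obtain rfl := (tower S (max n m)).det h3 h3'
    exact Subtype.ext (h2.symm.trans h2')

theorem lim_total (S : LineSys X) (x : (lim S).V) (a : X × Bool) : ∃ y, (lim S).E x a y := by
  obtain ⟨x, n, v, rfl⟩ := x
  by_cases hm : Missing (tower S n) v a
  · refine ⟨⟨emb S (n + 1) ((v, [a]) : (tower S n).V × List (X × Bool)), n + 1, _, rfl⟩, n + 1,
      ((v, []) : (tower S n).V × List (X × Bool)), _, emb_succ _ _ _, rfl, ?_⟩
    exact Or.inr (Or.inl ⟨rfl, rfl, Or.inl ⟨a, rfl, hm⟩⟩)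
  · unfold Missing at hm
    push Not at hm
    obtain ⟨w, hw⟩ := hm
    exact ⟨⟨emb S n w, n, w, rfl⟩, n, v, w, rfl, rfl, hw⟩

theorem lim_closed (S : LineSys X) {ρ L} (hρ : S.R ρ L) (x : (lim S).V) :
    Closed (lim S) ρ L x := by
  obtain ⟨x, n, v, rfl⟩ := x
  obtain ⟨q, h0, h1, h2⟩ := closed_old (tower_good S n) hρ v
  refine ⟨fun t => ⟨emb S (n + 1) (q t), n + 1, _, rfl⟩, ?_, fun t => ?_, fun t => ?_⟩
  · apply Subtype.ext
    show emb S (n + 1) (q 0) = _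
    rw [h0]
    exact emb_succ _ _ _
  · exact ⟨n + 1, q t, q (t + 1), rfl, rfl, h1 t⟩
  · simp only [h2]; rfl

noncomputable def stp (S : LineSys X) (a : X × Bool) (x : (lim S).V) : (lim S).V :=
  (lim_total S x a).choose

theorem stp_spec (S : LineSys X) (a : X × Bool) (x : (lim S).V) : (lim S).E x a (stp S a x) :=
  (lim_total S x a).choose_spec

theorem stp_inv (S : LineSys X) (a : X × Bool) (x : (lim S).V) : stp S (inv a) (stp S a x) = x :=
  (lim S).det (stp_spec S _ _) ((lim S).symm (stp_spec S a x))

noncomputable def prm (S : LineSys X) (x : X) : Equiv.Perm (lim S).V where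
  toFun := stp S (x, true)
  invFun := stp S (x, false)
  left_inv := stp_inv S (x, true)
  right_inv := stp_inv S (x, false)

noncomputable def act (S : LineSys X) : FreeGroup X →* Equiv.Perm (lim S).V :=
  FreeGroup.lift fun x => (prm S x)⁻¹

theorem act_letter (S : LineSys X) {x y : (lim S).V} {a : X × Bool} (h : (lim S).E x a y) :
    act S (FreeGroup.mk [a]) y = x := by
  obtain ⟨a, s⟩ := a
  cases s
  · have : act S (FreeGroup.mk [(a, false)]) = prm S a := by
      simp [act, FreeGroup.lift_mk]
    rw [this]
    exact (lim S).det (stp_spec S (a, true) y) ((lim S).symm h)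
  · have : act S (FreeGroup.mk [(a, true)]) = (prm S a)⁻¹ := by
      simp [act, FreeGroup.lift_mk]
    rw [this]
    exact (lim S).det (stp_spec S (a, false) y) ((lim S).symm h)

theorem act_read (S : LineSys X) {ρ : ℤ → X × Bool} {q : ℤ → (lim S).V}
    (h : ∀ t, (lim S).E (q t) (ρ t) (q (t + 1))) (k : ℕ) :
    act S (FreeGroup.mk ((List.range k).map fun i : ℕ => ρ i)) (q k) = q 0 := by
  induction k with
  | zero => simp [← FreeGroup.one_eq_mk]
  | succ k ih =>
    rw [List.range_succ, List.map_append, ← FreeGroup.mul_mk, map_mul, Equiv.Perm.mul_apply]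
    rw [← ih]
    congr 1
    have := h k
    exact act_letter S (by simpa using this)

theorem main (S : LineSys X) : ∃ (H : Type) (_ : Group H) (φ : FreeGroup X →* H),
    (∀ ρ L, S.R ρ L → φ (FreeGroup.mk ((List.range L).map fun i : ℕ => ρ i)) = 1) ∧
    ∀ x y, φ (FreeGroup.of x) = φ (FreeGroup.of y) → x = y := by
  refine ⟨Equiv.Perm (lim S).V, inferInstance, act S, ?_, ?_⟩
  · intro ρ L hρ
    ext1 x
    obtain ⟨q, h0, h1, h2⟩ := lim_closed S hρ x
    have := act_read S h1 L
    have e := h2 0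
    rw [zero_add] at e
    rw [e, h0] at this
    exact this
  · intro x y hxy
    let z : X → (lim S).V := fun x =>
      ⟨emb S 1 (((), [(x, true)]) : Unit × List (X × Bool)), 1, _, rfl⟩
    let o : (lim S).V := ⟨emb S 0 (), 0, _, rfl⟩
    have hE : ∀ x, (lim S).E o (x, true) (z x) := fun x =>
      ⟨1, (((), []) : Unit × List (X × Bool)), _, emb_succ S 0 (), rfl,
        Or.inr (Or.inl ⟨rfl, rfl, Or.inl ⟨_, rfl, fun _ h => h⟩⟩)⟩
    have h1 := act_letter S (hE x)
    have h2 := act_letter S (hE y)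
    change act S (FreeGroup.of x) (z x) = o at h1
    change act S (FreeGroup.of y) (z y) = o at h2
    rw [← hxy, ← h1] at h2
    have h3 := (act S (FreeGroup.of x)).injective h2
    have h4 := emb_inj S 1 (congrArg Subtype.val h3)
    have h5 := congrArg Prod.snd h4
    simp at h5
    exact h5.symm

end SC


namespace SC
variable {X : Type}

/-- Block description of a cyclic word: `c` blocks, the `k`-th being `head k` followed by
`y ^ (e k)`. -/
structure Blk (X : Type) where
  c : ℕ
  head : ℕ → List (X × Bool)
  y : X
  e : ℕ → ℕ

def Blk.ix (B : Blk X) (j : ℤ) : ℕ := (j % B.c).toNat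
def Blk.hl (B : Blk X) (j : ℤ) : ℕ := (B.head (B.ix j)).length
def Blk.ee (B : Blk X) (j : ℤ) : ℕ := B.e (B.ix j)
def Blk.blk (B : Blk X) (k : ℕ) : List (X × Bool) :=
  B.head k ++ List.replicate (B.e k) (B.y, true)
def Blk.pos (B : Blk X) (n : ℕ) : ℕ := ∑ k ∈ Finset.range n, ((B.head k).length + B.e k)
def Blk.len (B : Blk X) : ℕ := B.pos B.c

structure Blk.Ok (B : Blk X) : Prop where
  c_pos : 0 < B.c
  e_pos : ∀ k, 0 < B.e k

structure OnLine (B : Blk X) (ρ : ℤ → X × Bool) (P : ℤ → ℤ) : Prop where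
  step : ∀ j, P (j + 1) = P j + B.hl j + B.ee j
  hd : ∀ j (o : ℕ), o < B.hl j → (B.head (B.ix j))[o]? = some (ρ (P j + o))
  tl : ∀ j (o : ℕ), o < B.ee j → ρ (P j + B.hl j + o) = (B.y, true)

def IsLine (B : Blk X) (ρ : ℤ → X × Bool) : Prop := ∃ P, OnLine B ρ P

variable {B : Blk X}

theorem ix_lt (hB : B.Ok) (j : ℤ) : B.ix j < B.c := by
  have := hB.c_pos
  have := Int.emod_nonneg j (b := B.c) (by omega)
  have := Int.emod_lt_of_pos j (b := B.c) (by omega)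
  unfold Blk.ix
  omega

theorem ix_cast (hB : B.Ok) (j : ℤ) : (B.ix j : ℤ) = j % B.c := by
  have := hB.c_pos
  have := Int.emod_nonneg j (b := B.c) (by omega)
  unfold Blk.ix
  omega

theorem ix_add {j j' : ℤ} (hB : B.Ok) (h : B.ix j = B.ix j') (n : ℤ) :
    B.ix (j + n) = B.ix (j' + n) := by
  have h1 := ix_cast hB j
  have h2 := ix_cast hB j'
  unfold Blk.ix
  rw [Int.add_emod j, Int.add_emod j', ← h1, ← h2, h]

theorem ix_per (B : Blk X) (j : ℤ) : B.ix (j + B.c) = B.ix j := by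
  unfold Blk.ix; simp

theorem ix_succ (hB : B.Ok) (j : ℤ) (h : B.ix j + 1 < B.c) : B.ix (j + 1) = B.ix j + 1 := by
  have h1 := ix_cast hB j
  have h2 := ix_cast hB (j + 1)
  rw [Int.add_emod, ← h1] at h2
  have := hB.c_pos
  by_cases hc : B.c = 1
  · omega
  rw [Int.emod_eq_of_lt (a := 1) (by omega) (by omega), Int.emod_eq_of_lt (by omega) (by omega)] at h2
  omega

theorem ix_succ_last (hB : B.Ok) (j : ℤ) (h : B.ix j + 1 = B.c) : B.ix (j + 1) = 0 := by
  have h1 := ix_cast hB j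
  have h2 := ix_cast hB (j + 1)
  rw [← Int.emod_add_emod, ← h1] at h2
  rw [show (B.ix j : ℤ) + 1 = B.c by omega, Int.emod_self] at h2
  omega

theorem P_lt (hB : B.Ok) {P : ℤ → ℤ} (hP : ∀ j, P (j + 1) = P j + B.hl j + B.ee j) (j : ℤ) :
    P j < P (j + 1) := by
  have := hB.e_pos (B.ix j)
  have := hP j
  unfold Blk.ee at *
  omega

theorem P_mono (hB : B.Ok) {P : ℤ → ℤ} (hP : ∀ j, P (j + 1) = P j + B.hl j + B.ee j) :
    StrictMono P := strictMono_int_of_lt_succ (P_lt hB hP)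

theorem P_grow (hB : B.Ok) {P : ℤ → ℤ} (hP : ∀ j, P (j + 1) = P j + B.hl j + B.ee j) (n : ℕ) :
    P 0 + n ≤ P n ∧ P (-n) ≤ P 0 - n := by
  induction n with
  | zero => simp
  | succ n ih =>
    have h1 := P_lt hB hP n
    have h2 := P_lt hB hP (-(n + 1 : ℕ))
    rw [show (-((n + 1 : ℕ) : ℤ) + 1) = -n by push_cast; ring] at h2
    push_cast at *
    omega

theorem cover (hB : B.Ok) {P : ℤ → ℤ} (hP : ∀ j, P (j + 1) = P j + B.hl j + B.ee j) (u : ℤ) :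
    ∃ j, P j ≤ u ∧ u < P (j + 1) := by
  obtain ⟨j, hj1, hj2⟩ := Int.exists_greatest_of_bdd (P := fun j => P j ≤ u)
    ⟨(u - P 0).natAbs, fun z hz => by
      by_contra hlt
      push Not at hlt
      have h1 := (P_grow hB hP (u - P 0).natAbs).1
      have h2 := (P_mono hB hP) hlt
      omega⟩
    ⟨-(u - P 0).natAbs, by
      have h1 := (P_grow hB hP (u - P 0).natAbs).2
      omega⟩
  refine ⟨j, hj1, ?_⟩
  by_contra h
  have := hj2 (j + 1) (by omega)
  omega

theorem cover_unique (hB : B.Ok) {P : ℤ → ℤ} (hP : ∀ j, P (j + 1) = P j + B.hl j + B.ee j)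
    {u j j' : ℤ} (h1 : P j ≤ u) (h2 : u < P (j + 1)) (h1' : P j' ≤ u) (h2' : u < P (j' + 1)) :
    j = j' := by
  have m := P_mono hB hP
  have a := m.lt_iff_lt.1 (lt_of_le_of_lt h1 h2')
  have b := m.lt_iff_lt.1 (lt_of_le_of_lt h1' h2)
  omega

theorem OnLine.cases (hB : B.Ok) {ρ P} (h : OnLine B ρ P) (u : ℤ) :
    ∃ j, ∃ o : ℕ, (o < B.hl j ∧ u = P j + o ∧ (B.head (B.ix j))[o]? = some (ρ u)) ∨
      (o < B.ee j ∧ u = P j + B.hl j + o ∧ ρ u = (B.y, true)) := by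
  obtain ⟨j, h1, h2⟩ := cover hB h.step u
  have h3 := h.step j
  by_cases hc : u < P j + B.hl j
  · refine ⟨j, (u - P j).toNat, Or.inl ⟨by omega, by omega, ?_⟩⟩
    have := h.hd j (u - P j).toNat (by omega)
    rwa [show P j + ((u - P j).toNat : ℤ) = u by omega] at this
  · refine ⟨j, (u - P j - B.hl j).toNat, Or.inr ⟨by omega, by omega, ?_⟩⟩
    have := h.tl j (u - P j - B.hl j).toNat (by omega)
    rwa [show P j + B.hl j + ((u - P j - B.hl j).toNat : ℤ) = u by omega] at this

theorem OnLine.unique (hB : B.Ok) {ρ P σ Q} (h : OnLine B ρ P) (h' : OnLine B σ Q) {j j' : ℤ}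
    (hj : B.ix j = B.ix j') (hP : P j = Q j') : ρ = σ := by
  have hx := ix_add hB hj
  have key : ∀ n : ℤ, P (j + n) = Q (j' + n) := by
    intro n
    induction n using Int.induction_on with
    | zero => simpa using hP
    | succ n ih =>
      have a := h.step (j + n)
      have b := h'.step (j' + n)
      unfold Blk.hl Blk.ee at a b
      rw [hx] at a
      rw [← add_assoc, ← add_assoc]; omega
    | pred n ih =>
      have a := h.step (j + (-n - 1))
      have b := h'.step (j' + (-n - 1))
      unfold Blk.hl Blk.ee at a b
      rw [hx] at a
      rw [show j + (-(n : ℤ) - 1) + 1 = j + -n by ring] at a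
      rw [show j' + (-(n : ℤ) - 1) + 1 = j' + -n by ring] at b
      omega
  funext u
  obtain ⟨i, o, ⟨h1, h2, h3⟩ | ⟨h1, h2, h3⟩⟩ := h.cases hB u
  · have e := key (i - j)
    have e2 := hx (i - j)
    rw [show j + (i - j) = i by ring] at e e2
    have := h'.hd (j' + (i - j)) o (by unfold Blk.hl at *; rwa [← e2])
    rw [← e2, h3, ← e, ← h2] at this
    simpa using this
  · have e := key (i - j)
    have e2 := hx (i - j)
    rw [show j + (i - j) = i by ring] at e e2
    have := h'.tl (j' + (i - j)) o (by unfold Blk.ee at *; rwa [← e2])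
    unfold Blk.hl at this h2
    rw [← e2, ← e, ← h2] at this
    rw [h3, this]

theorem OnLine.shift {ρ P} (h : OnLine B ρ P) (t : ℤ) : OnLine B (sh t ρ) (fun j => P j - t) where
  step j := by have := h.step j; omega
  hd j o ho := by
    have := h.hd j o ho
    unfold sh; rw [this]; congr 2; ring
  tl j o ho := by
    have := h.tl j o ho
    unfold sh; rw [← this]; congr 1; ring

theorem OnLine.pos_eq (hB : B.Ok) {ρ P} (h : OnLine B ρ P) (n : ℕ) (hn : n ≤ B.c) :
    P n = P 0 + B.pos n := by
  induction n with
  | zero => simp [Blk.pos]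
  | succ n ih =>
    have a := h.step n
    have : B.ix (n : ℤ) = n := by
      have := ix_cast hB n
      rw [Int.emod_eq_of_lt (by omega) (by omega)] at this
      omega
    unfold Blk.hl Blk.ee at a
    rw [this, ih (by omega)] at a
    push_cast
    rw [a]
    unfold Blk.pos
    rw [Finset.sum_range_succ]
    push_cast; ring

theorem OnLine.per (hB : B.Ok) {ρ P} (h : OnLine B ρ P) (j : ℤ) : P (j + B.c) = P j + B.len := by
  induction j using Int.induction_on with
  | zero =>
    have := h.pos_eq hB B.c le_rfl
    simpa [Blk.len] using this
  | succ n ih =>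
    have a := h.step n
    have b := h.step (n + B.c)
    unfold Blk.hl Blk.ee at a b
    rw [ix_per] at b
    rw [show (n : ℤ) + 1 + B.c = n + B.c + 1 by ring]; omega
  | pred n ih =>
    have a := h.step (-n - 1)
    have b := h.step (-n - 1 + B.c)
    unfold Blk.hl Blk.ee at a b
    rw [ix_per] at b
    rw [show -(n : ℤ) - 1 + B.c + 1 = -n + B.c by ring] at b
    rw [show -(n : ℤ) - 1 + 1 = -n by ring] at a
    omega

theorem IsLine.per (hB : B.Ok) {ρ} (h : IsLine B ρ) (u : ℤ) : ρ (u + B.len) = ρ u := by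
  obtain ⟨P, h⟩ := h
  have := OnLine.unique hB (h.shift B.len) h (j := B.c) (j' := 0)
    (by have := ix_per B 0; rwa [zero_add] at this)
    (by have := h.per hB 0; rw [zero_add] at this; omega)
  exact congrFun this u

theorem exists_line (hB : B.Ok) : ∃ ρ P, OnLine B ρ P ∧ P 0 = 0 := by
  have hc := hB.c_pos
  let P : ℤ → ℤ := fun j => B.len * (j / B.c) + B.pos (B.ix j)
  have hP : ∀ j, P (j + 1) = P j + B.hl j + B.ee j := by
    intro j
    have hlt := ix_lt hB j
    have hd1 := Int.emod_add_mul_ediv j B.c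
    have hd2 := Int.emod_add_mul_ediv (j + 1) B.c
    rw [← ix_cast hB] at hd1 hd2
    have hps : B.pos (B.ix j + 1) = B.pos (B.ix j) + (B.hl j + B.ee j) := by
      unfold Blk.pos; rw [Finset.sum_range_succ]; rfl
    by_cases h : B.ix j + 1 = B.c
    · have h0 := ix_succ_last hB j h
      rw [h0] at hd2
      have : (j + 1) / (B.c : ℤ) = j / B.c + 1 := by
        have : (B.c : ℤ) * ((j + 1) / B.c) = B.c * (j / B.c + 1) := by push_cast at hd2; linarith
        exact mul_left_cancel₀ (by omega) this
      simp only [P]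
      rw [h0, this]
      rw [h] at hps
      have : (B.len : ℤ) = B.pos (B.ix j) + (B.hl j + B.ee j) := by
        unfold Blk.len; rw [hps]; push_cast; ring
      have h00 : B.pos 0 = 0 := by simp [Blk.pos]
      rw [h00, mul_add]; push_cast; linarith
    · have h0 := ix_succ hB j (by omega)
      rw [h0] at hd2
      have : (j + 1) / (B.c : ℤ) = j / B.c := by
        have : (B.c : ℤ) * ((j + 1) / B.c) = B.c * (j / B.c) := by push_cast at hd2; linarith
        exact mul_left_cancel₀ (by omega) this
      simp only [P]
      rw [h0, this, hps]
      push_cast; ring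
  choose J hJ1 hJ2 using cover hB hP
  refine ⟨fun u => ((B.head (B.ix (J u)))[(u - P (J u)).toNat]?).getD (B.y, true), P,
    ⟨hP, fun j o ho => ?_, fun j o ho => ?_⟩, ?_⟩
  · have hs := hP j
    have : J (P j + o) = j := cover_unique hB hP (hJ1 _) (hJ2 _) (by omega) (by omega)
    simp only [this]
    rw [show (P j + o - P j).toNat = o by omega]
    unfold Blk.hl at ho
    rw [List.getElem?_eq_getElem ho]; simp
  · have hs := hP j
    have : J (P j + B.hl j + o) = j := cover_unique hB hP (hJ1 _) (hJ2 _) (by omega) (by omega)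
    simp only [this]
    rw [List.getElem?_eq_none (by unfold Blk.hl; omega)]; simp
  · simp [P, Blk.ix, Blk.pos]

theorem line_word (hB : B.Ok) {ρ P} (h : OnLine B ρ P) (h0 : P 0 = 0) (n : ℕ) (hn : n ≤ B.c) :
    (List.range (B.pos n)).map (fun i : ℕ => ρ i) = (List.range n).flatMap B.blk := by
  induction n with
  | zero => simp [Blk.pos]
  | succ n ih =>
    have hix : B.ix (n : ℤ) = n := by
      have := ix_cast hB n
      rw [Int.emod_eq_of_lt (by omega) (by omega)] at this
      omega
    have hp : B.pos (n + 1) = B.pos n + ((B.head n).length + B.e n) := by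
      unfold Blk.pos; rw [Finset.sum_range_succ]
    have hPn := h.pos_eq hB n (by omega)
    rw [hp, List.range_add, List.map_append, ih (by omega), List.range_succ, List.flatMap_append]
    congr 1
    simp only [List.flatMap_cons, List.flatMap_nil, List.append_nil, List.map_map]
    rw [List.range_add, List.map_append]
    unfold Blk.blk
    congr 1
    · apply List.ext_getElem?
      intro i
      by_cases hi : i < (B.head n).length
      · have := h.hd n i (by unfold Blk.hl; rwa [hix])
        rw [hix] at this
        rw [this]
        simp only [List.getElem?_map, List.getElem?_range hi, Option.map_some, Function.comp]
        congr 2; omega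
      · rw [List.getElem?_eq_none (by simpa using hi), List.getElem?_eq_none (by simpa using hi)]
    · rw [List.eq_replicate_iff]
      refine ⟨by simp, ?_⟩
      intro a ha
      simp only [List.mem_map, List.mem_range, Function.comp] at ha
      obtain ⟨_, ⟨i, hi, rfl⟩, rfl⟩ := ha
      have := h.tl n i (by unfold Blk.ee; rwa [hix])
      rw [← this]
      unfold Blk.hl
      rw [hix]
      congr 1; push_cast; omega

end SC


namespace SC

/-- Data for the concrete presentation. -/
structure Par where
  A : Type
  ar : ℕ → ℕ
  har : ∀ m, 1 ≤ m → 1 ≤ ar m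
  val : ∀ m, (Fin (ar m) → A) → Option A
  p₁ : ℕ
  p₂ : ℕ
  h₁ : 10 ^ 10 < p₁
  h₂ : 10 ^ 10 < p₂

def ps {A : Type} (l : List A) : List (GenSym A × Bool) := l.map fun a => (GenSym.elt a, true)

open Classical in
noncomputable def red {A : Type} (v : Option A) (l : List A) : List (GenSym A × Bool) :=
  match v with
  | none => ps l
  | some a => if l.head? = some a then ps l.tail else (GenSym.elt a, false) :: ps l

def powB {A : Type} (f : GenSym A) (p : ℕ) : Blk (GenSym A) := ⟨p, fun _ => [], f, fun _ => 1⟩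

def chB {A : Type} (lo : ℕ) (x y : GenSym A) : Blk (GenSym A) :=
  ⟨1000, fun _ => [(x, true)], y, fun k => (lo + k + 1) ^ 2⟩

noncomputable def wB (Q : Par) (m : ℕ) (xs : Fin (Q.ar m) → Q.A) : Blk (GenSym Q.A) :=
  ⟨100, fun k => if k = 0 then red (Q.val m xs) (List.ofFn xs) else ps (List.ofFn xs), GenSym.b,
    fun k => 100 * m + k + 1⟩

inductive Ch {A : Type} : ℕ → GenSym A → GenSym A → Prop
  | v1 : Ch 4000 GenSym.f1 GenSym.f2
  | v2 : Ch 4000 GenSym.f2 GenSym.f1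
  | b1 : Ch 1000 GenSym.b GenSym.f1
  | b2 : Ch 1000 GenSym.b GenSym.f2
  | c1 : Ch 2000 GenSym.c GenSym.f1
  | c2 : Ch 2000 GenSym.c GenSym.f2
  | d1 : Ch 3000 GenSym.d GenSym.f1
  | d2 : Ch 3000 GenSym.d GenSym.f2
  | ac (a : A) : Ch 0 (GenSym.elt a) GenSym.c
  | ad (a : A) : Ch 0 (GenSym.elt a) GenSym.d

theorem Ch.ne {A : Type} {lo} {x y : GenSym A} (h : Ch lo x y) : x ≠ y := by
  cases h <;> simp

theorem Ch.y_ne {A : Type} {lo} {x y : GenSym A} (h : Ch lo x y) : y ≠ GenSym.b ∧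
    ∀ a, y ≠ GenSym.elt a := by
  cases h <;> simp

theorem Ch.det {A : Type} {lo lo'} {x y : GenSym A} (h : Ch lo x y) (h' : Ch lo' x y) :
    lo = lo' := by
  cases h <;> cases h' <;> rfl

theorem Ch.swap {A : Type} {lo lo'} {x y : GenSym A} (h : Ch lo x y) (h' : Ch lo' y x) :
    lo = 4000 := by
  cases h <;> cases h' <;> rfl

theorem Ch.le {A : Type} {lo} {x y : GenSym A} (h : Ch lo x y) : lo ≤ 4000 := by
  cases h <;> simp

theorem Ch.no_be {A : Type} {lo} {x y : GenSym A} (h : Ch lo x y) {a : A}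
    (hb : GenSym.b = x ∨ GenSym.b = y) (ha : GenSym.elt a = x ∨ GenSym.elt a = y) : False := by
  cases h <;> simp_all

inductive V (Q : Par) : Blk (GenSym Q.A) → Prop
  | pow (f : GenSym Q.A) (p : ℕ) (h : (f = GenSym.f1 ∧ p = Q.p₁) ∨ (f = GenSym.f2 ∧ p = Q.p₂)) :
      V Q (powB f p)
  | ch (lo : ℕ) (x y : GenSym Q.A) (h : Ch lo x y) : V Q (chB lo x y)
  | w (m : ℕ) (hm : 1 ≤ m) (xs : Fin (Q.ar m) → Q.A) : V Q (wB Q m xs)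

variable {Q : Par}

theorem V.ok {B} (h : V Q B) : B.Ok := by
  cases h with
  | pow f p h =>
    have := Q.h₁
    have := Q.h₂
    exact ⟨by show 0 < p; omega, fun _ => Nat.one_pos⟩
  | ch lo x y h => exact ⟨by show 0 < 1000; omega, fun k => by show 0 < (lo + k + 1) ^ 2; positivity⟩
  | w m hm xs => exact ⟨by show 0 < 100; omega, fun k => by show 0 < 100 * m + k + 1; omega⟩

theorem ok_ch {A : Type} (lo : ℕ) (x y : GenSym A) : (chB lo x y).Ok :=
  ⟨by show 0 < 1000; omega, fun k => by show 0 < (lo + k + 1) ^ 2; positivity⟩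

theorem ok_w (m : ℕ) (xs : Fin (Q.ar m) → Q.A) : (wB Q m xs).Ok :=
  ⟨by show 0 < 100; omega, fun k => by show 0 < 100 * m + k + 1; omega⟩

theorem red_length {A : Type} (v : Option A) (l : List A) :
    l.length - 1 ≤ (red v l).length ∧ (red v l).length ≤ l.length + 1 := by
  unfold red
  split
  · simp [ps]
  · split_ifs <;> simp [ps] <;> omega

theorem len_pow {A : Type} (f : GenSym A) (p : ℕ) : (powB f p).len = p := by
  simp [Blk.len, Blk.pos, powB]

theorem pos_ch {A : Type} (lo : ℕ) (x y : GenSym A) (n : ℕ) :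
    6 * (chB lo x y).pos n =
      6 * n + 6 * n * lo ^ 2 + 6 * lo * n * (n + 1) + n * (n + 1) * (2 * n + 1) := by
  induction n with
  | zero => simp [Blk.pos]
  | succ n ih =>
    have : (chB lo x y).pos (n + 1) = (chB lo x y).pos n + (1 + (lo + n + 1) ^ 2) := by
      unfold Blk.pos; rw [Finset.sum_range_succ]; rfl
    rw [this, mul_add, ih]; ring

theorem len_ch {A : Type} (lo : ℕ) (x y : GenSym A) :
    12 * (1 + (lo + 1000) ^ 2) + 20 ≤ (chB lo x y).len := by
  have := pos_ch lo x y 1000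
  have h2 : (chB lo x y).len = (chB lo x y).pos 1000 := rfl
  rw [h2]
  nlinarith

theorem len_w (m : ℕ) (hm : 1 ≤ m) (xs : Fin (Q.ar m) → Q.A) :
    36 * (Q.ar m + 1 + 100 * m + 100) + 20 ≤ (wB Q m xs).len := by
  have key : ∀ n, 2 * (n * (Q.ar m - 1) + n * (100 * m)) + n * (n + 1) ≤ 2 * (wB Q m xs).pos n := by
    intro n
    induction n with
    | zero => simp
    | succ n ih =>
      have : (wB Q m xs).pos (n + 1) =
          (wB Q m xs).pos n + (((wB Q m xs).head n).length + (100 * m + n + 1)) := by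
        unfold Blk.pos; rw [Finset.sum_range_succ]; rfl
      have h2 : Q.ar m - 1 ≤ ((wB Q m xs).head n).length := by
        unfold wB; simp only
        split_ifs
        · have := (red_length (Q.val m xs) (List.ofFn xs)).1
          simpa using this
        · simp [ps]
      rw [this]
      nlinarith
  have h3 := key 100
  have h4 : (wB Q m xs).len = (wB Q m xs).pos 100 := rfl
  have := Q.har m hm
  omega

/-! Letters on the lines. -/

theorem pow_letter {A : Type} {f : GenSym A} {p : ℕ} (hp : 0 < p) {ρ P}
    (h : OnLine (powB f p) ρ P) (u : ℤ) : ρ u = (f, true) := by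
  obtain ⟨j, o, ⟨h1, h2, h3⟩ | ⟨h1, h2, h3⟩⟩ := h.cases ⟨hp, fun _ => Nat.one_pos⟩ u
  · exact absurd h1 (by simp [Blk.hl, powB])
  · exact h3

theorem ch_cases {A : Type} {lo} {x y : GenSym A} {ρ P}
    (h : OnLine (chB lo x y) ρ P) (u : ℤ) : (∃ j, u = P j ∧ ρ u = (x, true)) ∨ ρ u = (y, true) := by
  obtain ⟨j, o, ⟨h1, h2, h3⟩ | ⟨h1, h2, h3⟩⟩ := h.cases (ok_ch lo x y) u
  · left
    have h1 : o < 1 := h1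
    obtain rfl : o = 0 := by omega
    refine ⟨j, by simpa using h2, ?_⟩
    simp [chB] at h3
    exact h3.symm
  · exact Or.inr h3

theorem ch_head {A : Type} {lo} {x y : GenSym A} {ρ P}
    (h : OnLine (chB lo x y) ρ P) (j : ℤ) : ρ (P j) = (x, true) := by
  have := h.hd j 0 (by show 0 < 1; omega)
  simp [chB] at this
  exact this.symm

theorem ch_tail {A : Type} {lo} {x y : GenSym A} {ρ P}
    (h : OnLine (chB lo x y) ρ P) (j : ℤ) (o : ℕ) (ho : o < (lo + (chB lo x y).ix j + 1) ^ 2) :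
    ρ (P j + 1 + o) = (y, true) := h.tl j o ho

theorem ch_step {A : Type} {lo} {x y : GenSym A} {ρ P}
    (h : OnLine (chB lo x y) ρ P) (j : ℤ) :
    P (j + 1) = P j + 1 + ((lo + (chB lo x y).ix j + 1) ^ 2 : ℕ) := h.step j

def IsElt {A : Type} (l : GenSym A × Bool) : Prop := ∃ a, l.1 = GenSym.elt a

theorem mem_ps {A : Type} {l : List A} {g} (h : g ∈ ps l) : ∃ a, g = (GenSym.elt a, true) := by
  simp [ps] at h
  obtain ⟨a, -, h⟩ := h
  exact ⟨a, h.symm⟩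

theorem mem_red {A : Type} {v} {l : List A} {g} (h : g ∈ red v l) : IsElt g := by
  unfold red at h
  split at h
  · obtain ⟨a, rfl⟩ := mem_ps h; exact ⟨a, rfl⟩
  · split_ifs at h
    · obtain ⟨a, rfl⟩ := mem_ps h; exact ⟨a, rfl⟩
    · rcases List.mem_cons.1 h with rfl | h
      · exact ⟨_, rfl⟩
      · obtain ⟨a, rfl⟩ := mem_ps h; exact ⟨a, rfl⟩

theorem w_head_elt {m : ℕ} {xs : Fin (Q.ar m) → Q.A} {ρ P} (h : OnLine (wB Q m xs) ρ P) (j : ℤ)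
    (o : ℕ) (ho : o < (wB Q m xs).hl j) : IsElt (ρ (P j + o)) := by
  have := List.mem_of_getElem? (h.hd j o ho)
  unfold wB at this
  simp only at this
  split_ifs at this
  · exact mem_red this
  · obtain ⟨a, e⟩ := mem_ps this
    exact ⟨a, by rw [e]⟩

theorem b_not_elt {A : Type} {l : GenSym A × Bool} (h : IsElt l) (h' : l = (GenSym.b, true)) : False := by
  obtain ⟨a, h⟩ := h
  rw [h'] at h
  cases h

theorem w_tail {m : ℕ} {xs : Fin (Q.ar m) → Q.A} {ρ P} (h : OnLine (wB Q m xs) ρ P) (j : ℤ)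
    (o : ℕ) (ho : o < (wB Q m xs).ee j) : ρ (P j + (wB Q m xs).hl j + o) = (GenSym.b, true) :=
  h.tl j o ho

theorem w_hl {m : ℕ} {xs : Fin (Q.ar m) → Q.A} (j : ℤ) (hj : (wB Q m xs).ix j ≠ 0) :
    (wB Q m xs).hl j = Q.ar m := by
  have e : (wB Q m xs).head ((wB Q m xs).ix j) = ps (List.ofFn xs) := if_neg hj
  unfold Blk.hl
  rw [e]; simp [ps]

theorem w_hl_le {m : ℕ} {xs : Fin (Q.ar m) → Q.A} (j : ℤ) :
    (wB Q m xs).hl j ≤ Q.ar m + 1 := by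
  by_cases hj : (wB Q m xs).ix j = 0
  · have e : (wB Q m xs).head ((wB Q m xs).ix j) = red (Q.val m xs) (List.ofFn xs) := if_pos hj
    unfold Blk.hl
    rw [e]
    have := (red_length (Q.val m xs) (List.ofFn xs)).2
    simpa using this
  · rw [w_hl j hj]; omega

theorem w_ee {m : ℕ} {xs : Fin (Q.ar m) → Q.A} (j : ℤ) :
    (wB Q m xs).ee j = 100 * m + (wB Q m xs).ix j + 1 := rfl

theorem w_letter {m : ℕ} {xs : Fin (Q.ar m) → Q.A} {ρ P} (h : OnLine (wB Q m xs) ρ P) (u : ℤ) :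
    (∃ j, ∃ o : ℕ, o < (wB Q m xs).hl j ∧ u = P j + o ∧ IsElt (ρ u)) ∨ ρ u = (GenSym.b, true) := by
  obtain ⟨j, o, ⟨h1, h2, h3⟩ | ⟨h1, h2, h3⟩⟩ := h.cases (ok_w m xs) u
  · left
    refine ⟨j, o, h1, h2, ?_⟩
    rw [h2]
    exact w_head_elt h j o h1
  · exact Or.inr h3

theorem w_start {m : ℕ} {xs : Fin (Q.ar m) → Q.A} {ρ P} (h : OnLine (wB Q m xs) ρ P) (u : ℤ)
    (h1 : ρ (u - 1) = (GenSym.b, true)) (h2 : IsElt (ρ u)) : ∃ j, u = P j := by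
  rcases w_letter h u with ⟨j, o, ho, e, -⟩ | h3
  · cases o with
    | zero => exact ⟨j, by simpa using e⟩
    | succ o =>
      exfalso
      have := w_head_elt h j o (by omega)
      rw [show P j + o = u - 1 by rw [e]; push_cast; ring] at this
      exact b_not_elt this h1
  · exact (b_not_elt h2 h3).elim

theorem w_headlen {m : ℕ} {xs : Fin (Q.ar m) → Q.A} {ρ P} (h : OnLine (wB Q m xs) ρ P) (j : ℤ)
    (n : ℕ) (h1 : ∀ i : ℕ, i < n → IsElt (ρ (P j + i))) (h2 : ρ (P j + n) = (GenSym.b, true)) :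
    (wB Q m xs).hl j = n := by
  rcases lt_trichotomy ((wB Q m xs).hl j) n with hlt | heq | hgt
  · exfalso
    have := w_tail h j 0 (by rw [w_ee]; omega)
    simp only [Nat.cast_zero, add_zero] at this
    exact b_not_elt (h1 _ hlt) this
  · exact heq
  · exact (b_not_elt (w_head_elt h j n hgt) h2).elim

theorem w_run {m : ℕ} {xs : Fin (Q.ar m) → Q.A} {ρ P} (h : OnLine (wB Q m xs) ρ P) (j : ℤ)
    (e : ℕ) (h1 : ∀ i : ℕ, i < e → ρ (P j + (wB Q m xs).hl j + i) = (GenSym.b, true))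
    (h2 : IsElt (ρ (P j + (wB Q m xs).hl j + e))) (h3 : 0 < (wB Q m xs).hl (j + 1)) :
    (wB Q m xs).ee j = e := by
  rcases lt_trichotomy ((wB Q m xs).ee j) e with hlt | heq | hgt
  · exfalso
    have := w_head_elt h (j + 1) 0 h3
    rw [h.step] at this
    simp only [Nat.cast_zero, add_zero] at this
    exact b_not_elt this (h1 _ hlt)
  · exact heq
  · exact (b_not_elt h2 (w_tail h j e hgt)).elim

theorem ps_inj {A : Type} {l l' : List A} (h : ps l = ps l') : l = l' := by
  unfold ps at h
  refine List.map_injective_iff.2 ?_ h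
  intro a b hab
  simpa using hab

end SC


namespace SC
variable {Q : Par}

theorem neg_letter {B} (hV : V Q B) {ρ} (h : IsLine B ρ) {u g} (hu : ρ u = (g, false)) :
    ∃ a, g = GenSym.elt a := by
  obtain ⟨P, h⟩ := h
  cases hV with
  | pow f p hf =>
    have := Q.h₁
    have := Q.h₂
    rw [pow_letter (by omega) h] at hu
    simp at hu
  | ch lo x y hc =>
    rcases ch_cases h u with ⟨-, -, h⟩ | h <;> rw [h] at hu <;> simp at hu
  | w m hm xs =>
    rcases w_letter h u with ⟨-, -, -, -, a, h⟩ | h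
    · rw [hu] at h; exact ⟨a, h⟩
    · rw [h] at hu; simp at hu

theorem ch_piece {lo : ℕ} {x y : GenSym Q.A} (hc : Ch lo x y) {ρ P}
    (h : OnLine (chB lo x y) ρ P) {B'} (hV : V Q B') {σ P'} (h' : OnLine B' σ P')
    (hag : ∀ u : ℤ, 0 ≤ u → u < N (chB lo x y).len → ρ u = σ u) :
    chB lo x y = B' ∧ ρ = σ := by
  have hB := ok_ch lo x y
  have hlen := len_ch lo x y
  obtain ⟨j0, h1, h2⟩ := cover hB h.step 0
  have hs1 := ch_step h j0
  have hs2 := ch_step h (j0 + 1)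
  have hi1 : (chB lo x y).ix j0 < 1000 := ix_lt hB j0
  have hi2 : (chB lo x y).ix (j0 + 1) < 1000 := ix_lt hB (j0 + 1)
  have hb1 : (lo + (chB lo x y).ix j0 + 1) ^ 2 ≤ (lo + 1000) ^ 2 :=
    Nat.pow_le_pow_left (by omega) 2
  have hb2 : (lo + (chB lo x y).ix (j0 + 1) + 1) ^ 2 ≤ (lo + 1000) ^ 2 :=
    Nat.pow_le_pow_left (by omega) 2
  have hb3 : 0 < (lo + (chB lo x y).ix (j0 + 1) + 1) ^ 2 := Nat.pow_pos (Nat.succ_pos _)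
  have hx1 := ch_head h (j0 + 1)
  have hx2 := ch_head h (j0 + 1 + 1)
  have hy := ch_tail h (j0 + 1)
  generalize hj : j0 + 1 = j at *
  set e := (lo + (chB lo x y).ix j + 1) ^ 2 with he
  rw [hs2] at hx2
  generalize hs : P j = s at *
  have hN : s + 1 + e < N (chB lo x y).len := by unfold N; omega
  rw [hag _ (by omega) (by omega)] at hx1 hx2
  have hy' : ∀ o : ℕ, o < e → σ (s + 1 + o) = (y, true) := fun o ho => by
    rw [← hag _ (by omega) (by omega)]; exact hy o ho
  have hy0 := hy' 0 hb3
  simp only [Nat.cast_zero, add_zero] at hy0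
  cases hV with
  | pow f p hf =>
    exfalso
    have := Q.h₁
    have := Q.h₂
    rw [pow_letter (by omega) h'] at hx1 hy0
    exact hc.ne (by simpa using hx1.symm.trans hy0)
  | w m hm xs =>
    exfalso
    rcases w_letter h' (s + 1) with ⟨-, -, -, -, a, h⟩ | h
    · rw [hy0] at h; exact hc.y_ne.2 a h
    · rw [hy0] at h; exact hc.y_ne.1 (by simpa using h)
  | ch lo' x' y' hc' =>
    rcases ch_cases h' s with ⟨j', hj', ex⟩ | ex
    · obtain rfl : x = x' := by simpa using hx1.symm.trans ex
      have ey : σ (s + 1) = (y', true) := by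
        have := ch_tail h' j' 0 (Nat.pow_pos (Nat.succ_pos _))
        rw [← hj'] at this
        simpa using this
      obtain rfl : y = y' := by simpa using hy0.symm.trans ey
      obtain rfl := hc.det hc'
      refine ⟨rfl, ?_⟩
      have hq := ch_head h' (j' + 1)
      have hq2 := ch_tail h' j'
      rw [ch_step h', ← hj'] at hq
      rw [← hj'] at hq2
      have hee : (lo + (chB lo x y).ix j' + 1) ^ 2 = e := by
        rcases lt_trichotomy ((lo + (chB lo x y).ix j' + 1) ^ 2) e with hlt | heq | hgt
        · exfalso
          have := hy' _ hlt
          rw [hq] at this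
          exact hc.ne (by simpa using this)
        · exact heq
        · exfalso
          have := hq2 _ hgt
          rw [hx2] at this
          exact hc.ne (by simpa using this)
      rw [he] at hee
      have := Nat.pow_left_injective (n := 2) (by omega) hee
      refine OnLine.unique hB h h' (j := j) (j' := j') (by omega) (by omega)
    · exfalso
      obtain rfl : x = y' := by simpa using hx1.symm.trans ex
      rcases ch_cases h' (s + 1) with ⟨j', hj', ey⟩ | ey
      · obtain rfl : y = x' := by simpa using hy0.symm.trans ey
        obtain rfl := hc.swap hc'
        have h4 : 1 < e := by rw [he]; nlinarith
        have e1 := hy' 1 h4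
        have e2 := ch_tail h' j' 0 (Nat.pow_pos (Nat.succ_pos _))
        rw [← hj'] at e2
        simp only [Nat.cast_zero, Nat.cast_one, add_zero] at e1 e2
        exact hc.ne (by simpa using e2.symm.trans e1)
      · exact hc.ne (by simpa using ey.symm.trans hy0)

theorem pow_piece {f : GenSym Q.A} {p : ℕ}
    (hf : (f = GenSym.f1 ∧ p = Q.p₁) ∨ (f = GenSym.f2 ∧ p = Q.p₂)) {ρ P}
    (h : OnLine (powB f p) ρ P) {B'} (hV : V Q B') {σ P'} (h' : OnLine B' σ P')
    (hag : ∀ u : ℤ, 0 ≤ u → u < N (powB f p).len → ρ u = σ u) :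
    powB f p = B' ∧ ρ = σ := by
  have hq1 := Q.h₁
  have hq2 := Q.h₂
  have hp : 10 ^ 10 < p := by rcases hf with ⟨-, rfl⟩ | ⟨-, rfl⟩ <;> assumption
  rw [len_pow] at hag
  have hN : 10 ^ 9 < N p := by unfold N; omega
  have hl : ∀ u : ℤ, 0 ≤ u → u < N p → σ u = (f, true) := fun u h1 h2 => by
    rw [← hag u h1 h2, pow_letter (by omega) h]
  cases hV with
  | pow f' p' hf' =>
    have hp' : 0 < p' := by rcases hf' with ⟨-, rfl⟩ | ⟨-, rfl⟩ <;> omega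
    have e := hl 0 (by omega) (by omega)
    rw [pow_letter hp' h'] at e
    obtain rfl : f' = f := by simpa using e
    obtain rfl : p = p' := by
      rcases hf with ⟨rfl, rfl⟩ | ⟨rfl, rfl⟩ <;> rcases hf' with ⟨h1, rfl⟩ | ⟨h1, rfl⟩ <;> simp at h1 <;> rfl
    refine ⟨rfl, ?_⟩
    funext u
    rw [pow_letter hp' h, pow_letter hp' h']
  | w m hm xs =>
    exfalso
    have e := hl 0 (by omega) (by omega)
    rcases w_letter h' 0 with ⟨-, -, -, -, a, h⟩ | h
    · rw [e] at h; rcases hf with ⟨rfl, -⟩ | ⟨rfl, -⟩ <;> simp at h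
    · rw [e] at h; rcases hf with ⟨rfl, -⟩ | ⟨rfl, -⟩ <;> simp at h
  | ch lo x y hc =>
    exfalso
    have hB := ok_ch lo x y
    obtain ⟨j0, h1, h2⟩ := cover hB h'.step 0
    have hs1 := ch_step h' j0
    have hi1 : (chB lo x y).ix j0 < 1000 := ix_lt hB j0
    have := hc.le
    have hb1 : (lo + (chB lo x y).ix j0 + 1) ^ 2 ≤ 5000 ^ 2 :=
      Nat.pow_le_pow_left (by omega) 2
    have hx1 := ch_head h' (j0 + 1)
    have hy := ch_tail h' (j0 + 1) 0 (Nat.pow_pos (Nat.succ_pos _))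
    rw [hl _ (by omega) (by omega)] at hx1 hy
    exact hc.ne (by simpa using hx1.symm.trans hy)

theorem w_piece {m : ℕ} (hm : 1 ≤ m) {xs : Fin (Q.ar m) → Q.A} {ρ P}
    (h : OnLine (wB Q m xs) ρ P) {B'} (hV : V Q B') {σ P'} (h' : OnLine B' σ P')
    (hag : ∀ u : ℤ, 0 ≤ u → u < N (wB Q m xs).len → ρ u = σ u) :
    wB Q m xs = B' ∧ ρ = σ := by
  have hB := ok_w m xs
  have hlen := len_w m hm xs
  have hn := Q.har m hm
  obtain ⟨j0, h1, h2⟩ := cover hB h.step 0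
  have hc : (wB Q m xs).c = 100 := rfl
  -- block sizes
  have hsz : ∀ i, P (i + 1) ≤ P i + (Q.ar m + 1 + 100 * m + 100 : ℕ) := by
    intro i
    have a := h.step i
    have b := w_hl_le (xs := xs) i
    have c := w_ee (xs := xs) i
    have d := ix_lt hB i
    omega
  obtain ⟨j, hj1, hj2, hj3, hj4⟩ : ∃ j, 1 ≤ (wB Q m xs).ix j ∧ (wB Q m xs).ix j ≤ 97 ∧ 0 < P j ∧
      P j ≤ (4 * (Q.ar m + 1 + 100 * m + 100) : ℕ) := by
    have a0 := hsz j0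
    have a1 := hsz (j0 + 1)
    have a2 := hsz (j0 + 1 + 1)
    have a3 := hsz (j0 + 1 + 1 + 1)
    have b1 := P_lt hB h.step (j0 + 1)
    have b2 := P_lt hB h.step (j0 + 1 + 1)
    have b3 := P_lt hB h.step (j0 + 1 + 1 + 1)
    have i1 := ix_lt hB (j0 + 1)
    have s1 := ix_succ hB (j0 + 1)
    have s2 := ix_succ hB (j0 + 1 + 1)
    have s3 := ix_succ hB (j0 + 1 + 1 + 1)
    have l1 := ix_succ_last hB (j0 + 1)
    have l2 := ix_succ_last hB (j0 + 1 + 1)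
    have l3 := ix_succ_last hB (j0 + 1 + 1 + 1)
    by_cases c1 : 1 ≤ (wB Q m xs).ix (j0 + 1) ∧ (wB Q m xs).ix (j0 + 1) ≤ 97
    · exact ⟨_, c1.1, c1.2, by omega, by omega⟩
    by_cases c2 : (wB Q m xs).ix (j0 + 1) = 0
    · exact ⟨j0 + 1 + 1, by omega, by omega, by omega, by omega⟩
    by_cases c3 : (wB Q m xs).ix (j0 + 1) = 99
    · exact ⟨j0 + 1 + 1 + 1, by omega, by omega, by omega, by omega⟩
    · exact ⟨j0 + 1 + 1 + 1 + 1, by omega, by omega, by omega, by omega⟩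
  have k1 := ix_succ hB j (by omega)
  have k2 := ix_succ hB (j + 1) (by omega)
  have t1 := h.step j
  have t2 := h.step (j + 1)
  have t0 := h.step (j - 1)
  rw [sub_add_cancel] at t0
  have l0 := w_hl (xs := xs) j (by omega)
  have l1 := w_hl (xs := xs) (j + 1) (by omega)
  have l2 := w_hl (xs := xs) (j + 1 + 1) (by omega)
  have e0 := w_ee (xs := xs) j
  have e1 := w_ee (xs := xs) (j + 1)
  have em := w_ee (xs := xs) (j - 1)
  rw [l0] at t1
  rw [l1, t1] at t2
  set e := (wB Q m xs).ee j with he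
  have e1' : (wB Q m xs).ee (j + 1) = e + 1 := by omega
  rw [e1'] at t2
  obtain ⟨n, hnn⟩ : ∃ n, n = Q.ar m := ⟨_, rfl⟩
  rw [← hnn] at l0 l1 l2 t1 t2
  generalize hs : P j = s at *
  have hN : s + 2 * n + 2 * e + 1 < N (wB Q m xs).len := by unfold N; omega
  -- letters
  have m0 : σ (s - 1) = (GenSym.b, true) := by
    rw [← hag _ (by omega) (by omega)]
    have := w_tail h (j - 1) ((wB Q m xs).ee (j - 1) - 1) (by omega)
    rwa [show P (j - 1) + (wB Q m xs).hl (j - 1) + ((wB Q m xs).ee (j - 1) - 1 : ℕ) = s - 1 by omega]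
      at this
  have m1 : ∀ i : ℕ, i < n → IsElt (σ (s + i)) := fun i hi => by
    rw [← hag _ (by omega) (by omega), ← hs]
    exact w_head_elt h j i (by omega)
  have m2 : ∀ i : ℕ, i < e → σ (s + n + i) = (GenSym.b, true) := fun i hi => by
    rw [← hag _ (by omega) (by omega)]
    have := w_tail h j i (by omega)
    rwa [l0, hs] at this
  have m3 : ∀ i : ℕ, i < n → IsElt (σ (s + n + e + i)) := fun i hi => by
    rw [← hag _ (by omega) (by omega), ← t1]
    exact w_head_elt h (j + 1) i (by omega)
  have m4 : ∀ i : ℕ, i < e + 1 → σ (s + n + e + n + i) = (GenSym.b, true) := fun i hi => by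
    rw [← hag _ (by omega) (by omega)]
    have := w_tail h (j + 1) i (by omega)
    rwa [l1, t1] at this
  have m5 : IsElt (σ (s + n + e + n + (e + 1 : ℕ))) := by
    rw [← hag _ (by omega) (by omega), ← t2]
    have := w_head_elt h (j + 1 + 1) 0 (by omega)
    simpa using this
  have m1' := m1 0 (by omega)
  have m3' := m3 0 (by omega)
  simp only [Nat.cast_zero, add_zero] at m1' m3'
  cases hV with
  | pow f p hf =>
    exfalso
    have := Q.h₁
    have := Q.h₂
    rw [pow_letter (by omega) h'] at m0
    have : f = GenSym.b := by simpa using m0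
    rw [this] at hf
    simp at hf
  | ch lo x y hc =>
    exfalso
    obtain ⟨a, ha⟩ := m1'
    refine hc.no_be (a := a) ?_ ?_
    · rcases ch_cases h' (s - 1) with ⟨-, -, h⟩ | h
      · left; simpa using m0.symm.trans h
      · right; simpa using m0.symm.trans h
    · rcases ch_cases h' s with ⟨-, -, h⟩ | h
      · left; rw [← ha, h]
      · right; rw [← ha, h]
  | w m' hm' xs' =>
    have hB' := ok_w m' xs'
    have hc' : (wB Q m' xs').c = 100 := rfl
    have hn' := Q.har m' hm'
    obtain ⟨j', hj'⟩ := w_start h' s m0 m1'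
    have g0 : (wB Q m' xs').hl j' = n := by
      refine w_headlen h' j' n (fun i hi => hj' ▸ m1 i hi) ?_
      have := m2 0 (by omega)
      simpa [← hj'] using this
    by_cases hz : 0 < (wB Q m' xs').hl (j' + 1)
    · have g1 : (wB Q m' xs').ee j' = e := by
        refine w_run h' j' e (fun i hi => ?_) ?_ hz
        · rw [g0, ← hj']; exact m2 i hi
        · rw [g0, ← hj']; exact m3'
      have d1 := w_ee (xs := xs') j'
      have d2 := ix_lt hB' j'
      obtain rfl : m = m' := by omega
      have hix : (wB Q m xs).ix j = (wB Q m xs').ix j' := by omega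
      obtain rfl : xs = xs' := by
        apply List.ofFn_injective
        apply ps_inj
        have u1 : (wB Q m xs).head ((wB Q m xs).ix j) = ps (List.ofFn xs) := if_neg (by omega)
        have u2 : (wB Q m xs').head ((wB Q m xs').ix j') = ps (List.ofFn xs') := if_neg (by omega)
        rw [← u1, ← u2]
        apply List.ext_getElem?
        intro i
        by_cases hi : i < n
        · rw [h.hd j i (by omega), h'.hd j' i (by omega), ← hj', hs, hag _ (by omega) (by omega)]
        · rw [List.getElem?_eq_none, List.getElem?_eq_none]
          · unfold Blk.hl at g0; omega
          · unfold Blk.hl at l0; omega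
      refine ⟨rfl, OnLine.unique hB h h' hix (by omega)⟩
    · exfalso
      have hz0 : (wB Q m' xs').hl (j' + 1) = 0 := by omega
      have x0 : (wB Q m' xs').ix (j' + 1) = 0 := by
        by_contra hne
        rw [w_hl _ hne] at hz; omega
      have x1 := ix_succ hB' (j' + 1) (by omega)
      have x2 := ix_succ hB' (j' + 1 + 1) (by omega)
      have y1 : (wB Q m' xs').ix j' = 99 := by
        have := ix_succ hB' j'
        have := ix_lt hB' j'
        omega
      have z2 := w_hl (xs := xs') (j' + 1 + 1) (by omega)
      have z3 := w_hl (xs := xs') (j' + 1 + 1 + 1) (by omega)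
      have f0 := w_ee (xs := xs') j'
      have f1 := w_ee (xs := xs') (j' + 1)
      have f2 := w_ee (xs := xs') (j' + 1 + 1)
      have s1 := h'.step j'
      have s2 := h'.step (j' + 1)
      rw [hz0] at s2
      have hrun : e = (wB Q m' xs').ee j' + (wB Q m' xs').ee (j' + 1) := by
        rcases lt_trichotomy e ((wB Q m' xs').ee j' + (wB Q m' xs').ee (j' + 1)) with hlt | heq | hgt
        · exfalso
          refine b_not_elt m3' ?_
          by_cases hcc : e < (wB Q m' xs').ee j'
          · have := w_tail h' j' e hcc
            rwa [g0, ← hj'] at this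
          · have := w_tail h' (j' + 1) (e - (wB Q m' xs').ee j') (by omega)
            rwa [hz0, show P' (j' + 1) + (0 : ℕ) + (e - (wB Q m' xs').ee j' : ℕ) = s + n + e by omega]
              at this
        · exact heq
        · exfalso
          have a := m2 _ hgt
          have b := w_head_elt h' (j' + 1 + 1) 0 (by omega)
          rw [show P' (j' + 1 + 1) + (0 : ℕ) = s + n + ((wB Q m' xs').ee j' + (wB Q m' xs').ee (j' + 1) : ℕ)
            by omega] at b
          exact b_not_elt b a
      have hP2 : P' (j' + 1 + 1) = s + n + e := by omega
      have g2 : (wB Q m' xs').hl (j' + 1 + 1) = n := by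
        refine w_headlen h' _ n (fun i hi => hP2 ▸ m3 i hi) ?_
        have := m4 0 (by omega)
        simpa [hP2] using this
      have g3 : (wB Q m' xs').ee (j' + 1 + 1) = e + 1 := by
        refine w_run h' _ (e + 1) (fun i hi => ?_) ?_ (by omega)
        · rw [g2, hP2]; exact m4 i hi
        · rw [g2, hP2]; exact m5
      omega

end SC


namespace SC

theorem bar_bar {X : Type} (ρ : ℤ → X × Bool) : bar (bar ρ) = ρ := by
  funext i; simp only [bar, inv_inv]; congr 1; ring

theorem bar_sh {X : Type} (t : ℤ) (ρ : ℤ → X × Bool) : bar (sh t ρ) = sh (-t) (bar ρ) := by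
  funext i; simp only [bar, sh]; congr 2; ring

theorem sh_sh {X : Type} (s t : ℤ) (ρ : ℤ → X × Bool) : sh s (sh t ρ) = sh (s + t) ρ := by
  funext i; simp only [sh]; congr 1; ring

variable {Q : Par}

theorem ps_get {A : Type} {l : List A} {o : ℕ} {g} (h : (ps l)[o]? = some g) : g.2 = true := by
  obtain ⟨a, rfl⟩ := mem_ps (List.mem_of_getElem? h); rfl

theorem w_neg {m : ℕ} (hm : 1 ≤ m) {xs : Fin (Q.ar m) → Q.A} {ρ P} (h : OnLine (wB Q m xs) ρ P)
    {u g} (hu : ρ u = (g, false)) :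
    ρ (u - 1) = (GenSym.b, true) ∧ ∃ x, ρ (u + 1) = (x, true) ∧ x ≠ g := by
  obtain ⟨j, o, ⟨h1, h2, h3⟩ | ⟨h1, h2, h3⟩⟩ := h.cases (ok_w m xs) u
  · rw [hu] at h3
    by_cases hj : (wB Q m xs).ix j = 0
    · have e : (wB Q m xs).head ((wB Q m xs).ix j) = red (Q.val m xs) (List.ofFn xs) := if_pos hj
      have hd := h.hd j
      have hl : (wB Q m xs).hl j = (red (Q.val m xs) (List.ofFn xs)).length := by
        unfold Blk.hl; rw [e]
      rw [e] at h3 hd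
      rw [hl] at hd
      unfold red at h3 hd
      split at h3
      · have := ps_get h3; simp at this
      · rename_i a hval
        rw [hval] at hd
        simp only at hd
        split_ifs at h3 hd with hh
        · have := ps_get h3; simp at this
        · cases o with
          | succ o =>
            rw [List.getElem?_cons_succ] at h3
            have := ps_get h3; simp at this
          | zero =>
            have hn := Q.har m hm
            obtain ⟨x, l, hxl⟩ : ∃ x l, List.ofFn xs = x :: l := by
              cases hcs : List.ofFn xs with
              | nil => have := congrArg List.length hcs; simp at this; omega
              | cons x l => exact ⟨x, l, rfl⟩
            rw [hxl] at h3 hd hh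
            have h4 := hd 1 (by simp [ps])
            simp [ps] at h3 h4 hh
            constructor
            · have s := h.step (j - 1)
              rw [sub_add_cancel] at s
              have em := w_ee (xs := xs) (j - 1)
              have := w_tail h (j - 1) ((wB Q m xs).ee (j - 1) - 1) (by omega)
              rwa [show P (j - 1) + (wB Q m xs).hl (j - 1) + ((wB Q m xs).ee (j - 1) - 1 : ℕ) = u - 1
                by omega] at this
            · refine ⟨GenSym.elt x, ?_, ?_⟩
              · rw [h2]; simpa using h4.symm
              · rw [← h3]; simpa using hh
    · have e : (wB Q m xs).head ((wB Q m xs).ix j) = ps (List.ofFn xs) := if_neg hj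
      rw [e] at h3
      have := ps_get h3; simp at this
  · rw [hu] at h3; simp at h3

theorem line_red {B} (hV : V Q B) {ρ} (h : IsLine B ρ) (u : ℤ) : ρ (u + 1) ≠ inv (ρ u) := by
  intro he
  obtain ⟨P, h⟩ := h
  cases hV with
  | pow f p hf =>
    have := Q.h₁
    have := Q.h₂
    rw [pow_letter (by omega) h, pow_letter (by omega) h] at he
    exact inv_ne _ he.symm
  | ch lo x y hc =>
    rcases ch_cases h u with ⟨-, -, h1⟩ | h1 <;> rcases ch_cases h (u + 1) with ⟨-, -, h2⟩ | h2 <;>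
      rw [h1, h2] at he <;> simp [inv] at he
  | w m hm xs =>
    rcases hu : ρ u with ⟨g, s⟩
    rw [hu] at he
    cases s
    · obtain ⟨-, x, hx, hne⟩ := w_neg hm h hu
      rw [hx] at he
      simp [inv] at he
      exact hne he
    · obtain ⟨a, ha⟩ := neg_letter (.w m hm xs) ⟨P, h⟩ (u := u + 1) (g := g) (by rw [he]; rfl)
      have h1 := (w_neg hm h (u := u + 1) (g := g) (by rw [he]; rfl)).1
      rw [add_sub_cancel_right, hu] at h1
      rw [ha] at h1
      simp at h1

theorem big_len {B} (hV : V Q B) : 13 ≤ B.len := by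
  cases hV with
  | pow f p hf =>
    have := Q.h₁
    have := Q.h₂
    rw [len_pow]; omega
  | ch lo x y hc => have := len_ch lo x y; omega
  | w m hm xs => have := len_w m hm xs; omega

/-- some letter in every window shows the orientation -/
theorem pos_piece {B B'} (hV : V Q B) (hV' : V Q B') {ρ σ} (h : IsLine B ρ) (h' : IsLine B' σ)
    (hag : ∀ u : ℤ, 0 ≤ u → u < N B.len → ρ u = σ u) : B = B' ∧ ρ = σ := by
  obtain ⟨P, h⟩ := h
  obtain ⟨P', h'⟩ := h'
  cases hV with
  | pow f p hf => exact pow_piece hf h hV' h' hag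
  | ch lo x y hc => exact ch_piece hc h hV' h' hag
  | w m hm xs => exact w_piece hm h hV' h' hag

theorem pos_window {B} (hV : V Q B) {ρ} (h : IsLine B ρ) :
    ∃ u : ℤ, 0 ≤ u ∧ u < N B.len ∧ ∃ g, ρ u = (g, true) ∧ ∀ a, g ≠ GenSym.elt a := by
  obtain ⟨P, h⟩ := h
  have hb := big_len hV
  cases hV with
  | pow f p hf =>
    have := Q.h₁
    have := Q.h₂
    refine ⟨0, le_rfl, by unfold N; omega, f, pow_letter (by omega) h 0, ?_⟩
    rcases hf with ⟨rfl, -⟩ | ⟨rfl, -⟩ <;> simp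
  | ch lo x y hc =>
    rcases ch_cases h 0 with ⟨j, hj, -⟩ | h1
    · refine ⟨1, by omega, by unfold N; omega, y, ?_, hc.y_ne.2⟩
      have := ch_tail h j 0 (Nat.pow_pos (Nat.succ_pos _))
      rw [← hj] at this
      simpa using this
    · exact ⟨0, le_rfl, by unfold N; omega, y, h1, hc.y_ne.2⟩
  | w m hm xs =>
    rcases w_letter h 0 with ⟨j, o, ho, hj, -⟩ | h1
    · have h2 := w_tail h j 0 (by rw [w_ee]; omega)
      simp only [Nat.cast_zero, add_zero] at h2
      have h3 := w_hl_le (xs := xs) j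
      have h4 := len_w m hm xs
      exact ⟨_, by omega, by unfold N; omega, _, h2, by simp⟩
    · exact ⟨0, le_rfl, by unfold N; omega, _, h1, by simp⟩

theorem pos_piece2 {B B'} (hV : V Q B) (hV' : V Q B') {ρ σ} (h : IsLine B ρ)
    (h' : IsLine B' σ ∨ IsLine B' (bar σ))
    (hag : ∀ u : ℤ, 0 ≤ u → u < N B.len → ρ u = σ u) : ρ = σ ∧ B.len = B'.len := by
  rcases h' with h' | h'
  · obtain ⟨rfl, h2⟩ := pos_piece hV hV' h h' hag
    exact ⟨h2, rfl⟩
  · exfalso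
    obtain ⟨u, h1, h2, g, h3, h4⟩ := pos_window hV h
    rw [hag u h1 h2] at h3
    obtain ⟨a, ha⟩ := neg_letter hV' h' (u := -1 - u) (g := g) (by
      simp only [bar]; rw [show -1 - (-1 - u) = u by ring, h3]; rfl)
    exact h4 a ha

theorem IsLine.shift {B : Blk (GenSym Q.A)} {ρ} (h : IsLine B ρ) (t : ℤ) : IsLine B (sh t ρ) := by
  obtain ⟨P, h⟩ := h
  exact ⟨_, h.shift t⟩

noncomputable def sys (Q : Par) : LineSys (GenSym Q.A) where
  R := fun ρ L => ∃ B, V Q B ∧ L = B.len ∧ (IsLine B ρ ∨ IsLine B (bar ρ))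
  shift := by
    rintro ρ L ⟨B, h1, h2, h3⟩ t
    refine ⟨B, h1, h2, ?_⟩
    rcases h3 with h3 | h3
    · exact Or.inl (h3.shift t)
    · right; rw [bar_sh]; exact h3.shift _
  bar := by
    rintro ρ L ⟨B, h1, h2, h3⟩
    refine ⟨B, h1, h2, ?_⟩
    rw [bar_bar]
    exact h3.symm
  per := by
    rintro ρ L ⟨B, h1, rfl, h3⟩ i
    rcases h3 with h3 | h3
    · exact h3.per h1.ok i
    · have := h3.per h1.ok (-1 - i - B.len)
      simp only [bar] at this
      have := congrArg inv this
      rw [inv_inv, inv_inv] at this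
      rw [show (-1 - (-1 - i - (B.len : ℤ))) = i + B.len by ring] at this
      rw [← this]; congr 1; ring
  red := by
    rintro ρ L ⟨B, h1, rfl, h3⟩ i he
    rcases h3 with h3 | h3
    · exact line_red h1 h3 i he
    · apply line_red h1 h3 (-2 - i)
      simp only [bar]
      rw [show -1 - (-2 - i + 1) = i by ring, show -1 - (-2 - i) = i + 1 by ring, he, inv_inv]
  big := by
    rintro ρ L ⟨B, h1, rfl, h3⟩
    exact big_len h1
  piece := by
    rintro ρ L σ M ⟨B, h1, rfl, h3⟩ ⟨B', h1', rfl, h3'⟩ hag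
    rcases h3 with h3 | h3
    · refine pos_piece2 h1 h1' h3 h3' fun u hu hu' => ?_
      obtain ⟨n, rfl⟩ := Int.eq_ofNat_of_zero_le hu
      exact hag n (by exact_mod_cast hu')
    · have := pos_piece2 h1 h1' (ρ := sh (-(N B.len : ℤ)) (bar ρ)) (σ := sh (-(N B.len : ℤ)) (bar σ))
        (h3.shift _) ?_ ?_
      · obtain ⟨e1, e2⟩ := this
        refine ⟨?_, e2⟩
        have := congrArg (sh (N B.len : ℤ)) e1
        rw [sh_sh, sh_sh] at this
        have e3 : ∀ τ : ℤ → GenSym Q.A × Bool, sh 0 τ = τ := fun τ => by funext i; simp [sh]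
        rw [add_neg_cancel, e3, e3] at this
        rw [← bar_bar ρ, this, bar_bar]
      · rcases h3' with h | h
        · right
          rw [bar_sh, bar_bar]; exact h.shift _
        · left; exact h.shift _
      · intro u hu hu'
        simp only [sh, bar]
        have := hag (N B.len - 1 - u).toNat (by omega)
        rw [show (((N B.len : ℤ) - 1 - u).toNat : ℤ) = -1 - (u + -(N B.len : ℤ)) by omega] at this
        rw [this]

theorem mk_flatMap {X : Type} (f : ℕ → List (X × Bool)) (l : List ℕ) :
    FreeGroup.mk (l.flatMap f) = (l.map fun k => FreeGroup.mk (f k)).prod := by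
  induction l with
  | nil => simp [← FreeGroup.one_eq_mk]
  | cons a l ih => rw [List.flatMap_cons, ← FreeGroup.mul_mk, ih]; simp

theorem mk_replicate {X : Type} (y : X) (n : ℕ) :
    FreeGroup.mk (List.replicate n (y, true)) = FreeGroup.of y ^ n := by
  induction n with
  | zero => simp [← FreeGroup.one_eq_mk]
  | succ n ih =>
    rw [List.replicate_succ, pow_succ', ← ih]; rfl

theorem mk_ps {A : Type} (l : List A) :
    FreeGroup.mk (ps l) = (l.map fun a => FreeGroup.of (GenSym.elt a)).prod := by
  induction l with
  | nil => simp [ps, ← FreeGroup.one_eq_mk]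
  | cons a l ih => rw [List.map_cons, List.prod_cons, ← ih]; rfl

theorem mk_red {A : Type} (a : A) (l : List A) :
    FreeGroup.mk (red (some a) l) = (FreeGroup.of (GenSym.elt a))⁻¹ * FreeGroup.mk (ps l) := by
  unfold red
  simp only
  split_ifs with h
  · cases l with
    | nil => simp at h
    | cons x l =>
      simp at h; subst h
      rw [mk_ps (x :: l), mk_ps]
      simp
  · rfl

theorem blk_word {X : Type} (B : Blk X) :
    FreeGroup.mk ((List.range B.c).flatMap B.blk) =
      ((List.range B.c).map fun k => FreeGroup.mk (B.head k) * FreeGroup.of B.y ^ B.e k).prod := by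
  rw [mk_flatMap]
  congr 2
  funext k
  unfold Blk.blk
  rw [← FreeGroup.mul_mk, mk_replicate]

theorem map_chain {G H : Type*} [Group G] [Group H] (φ : G →* H) (lo : ℕ) (x y : G) :
    φ (chainProd lo x y) = chainProd lo (φ x) (φ y) := by
  unfold chainProd
  rw [map_list_prod, List.map_map]
  congr 2
  funext k
  simp

theorem map_w {G H : Type*} [Group G] [Group H] (φ : G →* H) (m : ℕ) {n : ℕ} (xs : Fin n → G)
    (y : G) : φ (wProd m xs y) = wProd m (fun i => φ (xs i)) (φ y) := by
  unfold wProd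
  rw [map_list_prod, List.map_map]
  congr 2
  funext k
  simp [map_list_prod, List.map_ofFn, Function.comp_def]

theorem target (Q : Par) : ∃ (H : Type) (_ : Group H) (g : GenSym Q.A → H),
    Function.Injective g ∧ g GenSym.f1 ^ Q.p₁ = 1 ∧ g GenSym.f2 ^ Q.p₂ = 1 ∧
    (∀ lo x y, Ch lo x y → chainProd lo (g x) (g y) = 1) ∧
    ∀ m, 1 ≤ m → ∀ xs : Fin (Q.ar m) → Q.A,
      (Q.val m xs = none → wProd m (fun i => g (GenSym.elt (xs i))) (g GenSym.b) = 1) ∧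
      ∀ a, Q.val m xs = some a →
        wProd m (fun i => g (GenSym.elt (xs i))) (g GenSym.b) = g (GenSym.elt a) := by
  obtain ⟨H, _, φ, h1, h2⟩ := main (sys Q)
  have key : ∀ B, V Q B →
      φ ((List.range B.c).map fun k => FreeGroup.mk (B.head k) * FreeGroup.of B.y ^ B.e k).prod = 1 := by
    intro B hV
    obtain ⟨ρ, P, h, h0⟩ := exists_line hV.ok
    have := h1 ρ B.len ⟨B, hV, rfl, Or.inl ⟨P, h⟩⟩
    unfold Blk.len at this
    rwa [line_word hV.ok h h0 B.c le_rfl, blk_word] at this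
  have hpow : ∀ f p, V Q (powB f p) → φ (FreeGroup.of f) ^ p = 1 := by
    intro f p hV
    have := key _ hV
    simpa [powB, ← FreeGroup.one_eq_mk] using this
  refine ⟨H, inferInstance, fun x => φ (FreeGroup.of x), h2, ?_, ?_, ?_, ?_⟩
  · exact hpow _ _ (.pow _ _ (Or.inl ⟨rfl, rfl⟩))
  · exact hpow _ _ (.pow _ _ (Or.inr ⟨rfl, rfl⟩))
  · intro lo x y hc
    have := key _ (.ch lo x y hc)
    simp only
    rw [← map_chain]
    exact this
  · intro m hm xs
    have := key _ (.w m hm xs)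
    have e : ∀ k, (wB Q m xs).e k = 100 * m + k + 1 := fun _ => rfl
    have hw : wProd m (fun i => FreeGroup.of (GenSym.elt (xs i))) (FreeGroup.of GenSym.b) =
        ((List.range 100).map fun k => FreeGroup.mk (ps (List.ofFn xs)) *
          FreeGroup.of GenSym.b ^ (100 * m + k + 1)).prod := by
      unfold wProd
      rw [mk_ps, List.map_ofFn]; rfl
    simp only
    rw [← map_w φ m (fun i => FreeGroup.of (GenSym.elt (xs i))), hw]
    refine ⟨fun hv => ?_, fun a hv => ?_⟩
    · refine Eq.trans (congrArg φ ?_) this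
      have hc : (wB Q m xs).c = 100 := rfl
      have hh : (fun k => FreeGroup.mk (ps (List.ofFn xs)) *
          FreeGroup.of GenSym.b ^ (100 * m + k + 1)) = fun k =>
          FreeGroup.mk ((wB Q m xs).head k) *
            FreeGroup.of (wB Q m xs).y ^ (wB Q m xs).e k := by
        funext k
        simp [wB, hv, red]
      rw [hc, hh]
    · have hc : (wB Q m xs).c = 99 + 1 := rfl
      rw [hc, List.range_succ_eq_map, List.map_cons, List.prod_cons] at this
      have hr : List.range 100 = 0 :: (List.range 99).map Nat.succ := List.range_succ_eq_map
      rw [hr, List.map_cons, List.prod_cons]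
      have a1 : (wB Q m xs).head 0 = red (some a) (List.ofFn xs) := by simp [wB, hv]
      rw [a1, mk_red, List.map_map] at this
      rw [List.map_map]
      have a2 : ∀ k, (wB Q m xs).head (k + 1) = ps (List.ofFn xs) := fun k => by simp [wB]
      simp only [Function.comp_def, Nat.succ_eq_add_one, a2, e] at this
      have e2 : (wB Q m xs).y = GenSym.b := rfl
      rw [e2, mul_assoc, mul_assoc, map_mul, map_inv, inv_mul_eq_one, ← mul_assoc] at this
      simp only [Function.comp_def, Nat.succ_eq_add_one]
      exact this.symm

end SC

namespace SC

theorem wProd_mem {G : Type*} [Group G] (K : Subgroup G) (m : ℕ) {n : ℕ} (xs : Fin n → G) (y : G)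
    (hx : ∀ i, xs i ∈ K) (hy : y ∈ K) : wProd m xs y ∈ K := by
  unfold wProd
  apply list_prod_mem
  intro z hz
  obtain ⟨k, -, rfl⟩ := List.mem_map.1 hz
  refine mul_mem (list_prod_mem ?_) (pow_mem hy _)
  intro z hz
  obtain ⟨i, rfl⟩ := (List.mem_ofFn' _ _).1 hz
  exact hx i

theorem easy (S : IndexedStructure) (p₁ p₂ : ℕ)
    (h : ∃ s : Set S.A, s.Finite ∧
      ∀ B : Set S.A, s ⊆ B →
        (∀ m, 1 ≤ m → S.isFunc m →
          ∀ as : Fin (S.arity m) → S.A, (∀ i, as i ∈ B) → S.funcInterp m as ∈ B) →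
        B = Set.univ) :
    Group.FG (GA S p₁ p₂) := by
  obtain ⟨s, hs, hB⟩ := h
  let T : Set (GenSym S.A) := GenSym.elt '' s ∪ {GenSym.b, GenSym.c, GenSym.d, GenSym.f1, GenSym.f2}
  have hT : T.Finite := (hs.image _).union (by simp)
  let K := Subgroup.closure (gen S p₁ p₂ '' T)
  have hK : ∀ x ∈ T, gen S p₁ p₂ x ∈ K := fun x hx => Subgroup.subset_closure ⟨x, hx, rfl⟩
  have hU := hB {a | gen S p₁ p₂ (GenSym.elt a) ∈ K}
    (fun a ha => hK _ (Or.inl ⟨a, ha, rfl⟩)) (by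
      intro m hm hf as has
      have hr : PresentedGroup.mk (grpRels S p₁ p₂)
          (wProd m (fun i => FreeGroup.of (GenSym.elt (as i))) (FreeGroup.of GenSym.b) *
        (FreeGroup.of (GenSym.elt (S.funcInterp m as)))⁻¹) = 1 :=
        PresentedGroup.one_of_mem (Or.inl (Or.inr ⟨m, hm, hf, as, rfl⟩))
      rw [map_mul, map_inv, mul_inv_eq_one, map_w] at hr
      change PresentedGroup.mk (grpRels S p₁ p₂) (FreeGroup.of (GenSym.elt (S.funcInterp m as))) ∈ K
      rw [← hr]
      exact wProd_mem K m _ _ has (hK _ (Or.inr (by simp))))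
  rw [Group.fg_iff]
  refine ⟨gen S p₁ p₂ '' T, ?_, hT.image _⟩
  rw [eq_top_iff, ← PresentedGroup.closure_range_of, Subgroup.closure_le]
  rintro _ ⟨x, rfl⟩
  cases x with
  | elt a => exact (Set.eq_univ_iff_forall.1 hU a)
  | _ => exact hK _ (Or.inr (by simp))

/-- Any finitely generated group generated by a family is generated by a finite subfamily. -/
theorem finite_subfamily {G ι : Type*} [Group G] (g : ι → G)
    (hg : Subgroup.closure (Set.range g) = ⊤) (h : Group.FG G) :
    ∃ F : Set ι, F.Finite ∧ Subgroup.closure (g '' F) = ⊤ := by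
  have key : ∀ x : G, ∃ F : Set ι, F.Finite ∧ x ∈ Subgroup.closure (g '' F) := by
    intro x
    have hx : x ∈ Subgroup.closure (Set.range g) := hg ▸ Subgroup.mem_top x
    induction hx using Subgroup.closure_induction with
    | mem x hx =>
      obtain ⟨i, rfl⟩ := hx
      exact ⟨{i}, Set.finite_singleton i, Subgroup.subset_closure ⟨i, rfl, rfl⟩⟩
    | one => exact ⟨∅, Set.finite_empty, one_mem _⟩
    | mul x y _ _ hx hy =>
      obtain ⟨F, hF, hx⟩ := hx
      obtain ⟨F', hF', hy⟩ := hy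
      exact ⟨F ∪ F', hF.union hF', mul_mem
        (Subgroup.closure_mono (Set.image_mono Set.subset_union_left) hx)
        (Subgroup.closure_mono (Set.image_mono Set.subset_union_right) hy)⟩
    | inv x _ hx =>
      obtain ⟨F, hF, hx⟩ := hx
      exact ⟨F, hF, inv_mem hx⟩
  obtain ⟨T, hT, hTf⟩ := Group.fg_iff.1 h
  choose F hF hx using key
  refine ⟨⋃ x ∈ T, F x, hTf.biUnion fun x _ => hF x, ?_⟩
  rw [eq_top_iff, ← hT, Subgroup.closure_le]
  intro x hxT
  exact Subgroup.closure_mono (Set.image_mono (Set.subset_biUnion_of_mem hxT)) (hx x)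

/-- A homomorphism out of `G(𝒜)` obtained from a map `φ` into the doubled structure. -/
theorem exists_hom (S : IndexedStructure) (Q : Par) (φ : S.A → Q.A) (har : Q.ar = S.arity)
    (H : Type) [Group H] (g : GenSym Q.A → H) (h1 : g GenSym.f1 ^ Q.p₁ = 1)
    (h2 : g GenSym.f2 ^ Q.p₂ = 1)
    (hc : ∀ lo x y, Ch lo x y → chainProd lo (g x) (g y) = 1)
    (hf : ∀ m, 1 ≤ m → S.isFunc m → ∀ as : Fin (S.arity m) → S.A,
      wProd m (fun i => g (GenSym.elt (φ (as i)))) (g GenSym.b) =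
        g (GenSym.elt (φ (S.funcInterp m as))))
    (hr : ∀ m, 1 ≤ m → ¬ S.isFunc m → ∀ as : Fin (S.arity m) → S.A,
      wProd m (fun i => g (GenSym.elt (φ (as i)))) (g GenSym.b) = 1) :
    ∃ ψ : GA S Q.p₁ Q.p₂ →* H, (∀ a, ψ (gen S Q.p₁ Q.p₂ (GenSym.elt a)) = g (GenSym.elt (φ a))) ∧
      ψ (gen S Q.p₁ Q.p₂ GenSym.b) = g GenSym.b ∧ ψ (gen S Q.p₁ Q.p₂ GenSym.c) = g GenSym.c ∧
      ψ (gen S Q.p₁ Q.p₂ GenSym.d) = g GenSym.d ∧ ψ (gen S Q.p₁ Q.p₂ GenSym.f1) = g GenSym.f1 ∧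
      ψ (gen S Q.p₁ Q.p₂ GenSym.f2) = g GenSym.f2 := by
  let t : GenSym S.A → H := fun x => match x with
    | GenSym.elt a => g (GenSym.elt (φ a))
    | GenSym.b => g GenSym.b
    | GenSym.c => g GenSym.c
    | GenSym.d => g GenSym.d
    | GenSym.f1 => g GenSym.f1
    | GenSym.f2 => g GenSym.f2
  have ht : ∀ r ∈ grpRels S Q.p₁ Q.p₂, FreeGroup.lift t r = 1 := by
    intro r hr0
    rcases hr0 with (((hr1 | ⟨a, hr1 | hr1⟩) | ⟨m, hm, hmf, as, hr1⟩) | ⟨m, hm, hmf, as, -, hr1⟩)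
    · rcases hr1 with hr1 | hr1 | hr1 | hr1 | hr1 | hr1 | hr1 | hr1 | hr1 | hr1
      · rw [hr1, map_pow, FreeGroup.lift_apply_of]; exact h1
      · rw [hr1, map_pow, FreeGroup.lift_apply_of]; exact h2
      · rw [hr1, map_chain, FreeGroup.lift_apply_of, FreeGroup.lift_apply_of]; exact hc _ _ _ .v1
      · rw [hr1, map_chain, FreeGroup.lift_apply_of, FreeGroup.lift_apply_of]; exact hc _ _ _ .v2
      · rw [hr1, map_chain, FreeGroup.lift_apply_of, FreeGroup.lift_apply_of]; exact hc _ _ _ .b1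
      · rw [hr1, map_chain, FreeGroup.lift_apply_of, FreeGroup.lift_apply_of]; exact hc _ _ _ .b2
      · rw [hr1, map_chain, FreeGroup.lift_apply_of, FreeGroup.lift_apply_of]; exact hc _ _ _ .c1
      · rw [hr1, map_chain, FreeGroup.lift_apply_of, FreeGroup.lift_apply_of]; exact hc _ _ _ .c2
      · rw [hr1, map_chain, FreeGroup.lift_apply_of, FreeGroup.lift_apply_of]; exact hc _ _ _ .d1
      · rw [hr1, map_chain, FreeGroup.lift_apply_of, FreeGroup.lift_apply_of]; exact hc _ _ _ .d2
    · rw [hr1, map_chain, FreeGroup.lift_apply_of, FreeGroup.lift_apply_of]; exact hc _ _ _ (.ac _)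
    · rw [hr1, map_chain, FreeGroup.lift_apply_of, FreeGroup.lift_apply_of]; exact hc _ _ _ (.ad _)
    · rw [hr1, map_mul, map_inv, mul_inv_eq_one, map_w]
      simp only [FreeGroup.lift_apply_of]
      exact hf m hm hmf as
    · rw [hr1, map_w]
      simp only [FreeGroup.lift_apply_of]
      exact hr m hm hmf as
  have hψ : ∀ x, PresentedGroup.toGroup ht (gen S Q.p₁ Q.p₂ x) = t x := fun x =>
    PresentedGroup.toGroup.of ht
  exact ⟨PresentedGroup.toGroup ht, fun a => hψ _, hψ _, hψ _, hψ _, hψ _, hψ _⟩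

open Classical in
theorem hard (S : IndexedStructure) (p₁ p₂ : ℕ) (hbig₁ : 10 ^ 10 < p₁) (hbig₂ : 10 ^ 10 < p₂)
    (h : Group.FG (GA S p₁ p₂)) :
    ∃ s : Set S.A, s.Finite ∧
      ∀ B : Set S.A, s ⊆ B →
        (∀ m, 1 ≤ m → S.isFunc m →
          ∀ as : Fin (S.arity m) → S.A, (∀ i, as i ∈ B) → S.funcInterp m as ∈ B) →
        B = Set.univ := by
  obtain ⟨F, hF, hFt⟩ := finite_subfamily (gen S p₁ p₂)
    (PresentedGroup.closure_range_of (grpRels S p₁ p₂)) h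
  refine ⟨{a | GenSym.elt a ∈ F}, hF.preimage (fun a _ b _ e => GenSym.elt.inj e), ?_⟩
  intro B hsB hBf
  by_contra hne
  obtain ⟨a, ha⟩ := (Set.ne_univ_iff_exists_notMem B).1 hne
  let A' : Type := {z : S.A × Bool // z.1 ∈ B → z.2 = false}
  let φ₀ : S.A → A' := fun x => ⟨(x, false), fun _ => rfl⟩
  let φ₁ : S.A → A' := fun x => ⟨(x, decide (x ∉ B)), fun hx => by simpa using hx⟩
  let π : A' → S.A := fun z => z.1.1
  have hB01 : ∀ x ∈ B, φ₀ x = φ₁ x := by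
    intro x hx
    apply Subtype.ext
    simp [φ₀, φ₁, hx]
  have hnB : ∀ x, φ₀ x = φ₁ x → x ∈ B := by
    intro x hx
    have := congrArg (fun z : A' => z.1.2) hx
    simpa [φ₀, φ₁] using this
  let E : ∀ m, (Fin (S.arity m) → A') → A' := fun m xs =>
    if ∀ i, xs i = φ₁ (π (xs i)) then φ₁ (S.funcInterp m fun i => π (xs i))
    else φ₀ (S.funcInterp m fun i => π (xs i))
  let Q : Par := ⟨A', S.arity, S.arity_pos,
    fun m xs => if S.isFunc m then some (E m xs) else none, p₁, p₂, hbig₁, hbig₂⟩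
  obtain ⟨H, _, g, ginj, g1, g2, gc, gw⟩ := target Q
  have E1 : ∀ m as, E m (fun i => φ₁ (as i)) = φ₁ (S.funcInterp m as) := by
    intro m as
    exact if_pos fun i => rfl
  have E0 : ∀ m, 1 ≤ m → S.isFunc m → ∀ as,
      E m (fun i => φ₀ (as i)) = φ₀ (S.funcInterp m as) := by
    intro m hm hf as
    by_cases hh : ∀ i, φ₀ (as i) = φ₁ (as i)
    · have : E m (fun i => φ₀ (as i)) = φ₁ (S.funcInterp m as) := if_pos hh
      rw [this, hB01 _ (hBf m hm hf as fun i => hnB _ (hh i))]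
    · exact if_neg hh
  have hrel : ∀ φ : S.A → A', ∀ m, 1 ≤ m → ¬ S.isFunc m → ∀ as : Fin (S.arity m) → S.A,
      wProd m (fun i => g (GenSym.elt (φ (as i)))) (g GenSym.b) = 1 := by
    intro φ m hm hf as
    exact (gw m hm fun i => φ (as i)).1 (if_neg hf)
  have hfun : ∀ φ : S.A → A', (∀ m, 1 ≤ m → S.isFunc m → ∀ as,
      E m (fun i => φ (as i)) = φ (S.funcInterp m as)) →
      ∀ m, 1 ≤ m → S.isFunc m → ∀ as : Fin (S.arity m) → S.A,
      wProd m (fun i => g (GenSym.elt (φ (as i)))) (g GenSym.b) =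
        g (GenSym.elt (φ (S.funcInterp m as))) := by
    intro φ hφ m hm hf as
    rw [← hφ m hm hf as]
    exact (gw m hm fun i => φ (as i)).2 _ (if_pos hf)
  obtain ⟨ψ₀, a0, b0, c0, d0, e0, f0⟩ :=
    exists_hom S Q φ₀ rfl H g g1 g2 gc (hfun φ₀ E0) (hrel φ₀)
  obtain ⟨ψ₁, a1, b1, c1, d1, e1, f1⟩ :=
    exists_hom S Q φ₁ rfl H g g1 g2 gc (hfun φ₁ fun m _ _ as => E1 m as) (hrel φ₁)
  have hle : Subgroup.closure (gen S p₁ p₂ '' F) ≤ MonoidHom.eqLocus ψ₀ ψ₁ := by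
    rw [Subgroup.closure_le]
    rintro _ ⟨x, hx, rfl⟩
    change ψ₀ _ = ψ₁ _
    cases x with
    | elt x => exact (a0 x).trans ((congrArg (fun z => g (GenSym.elt z)) (hB01 x (hsB hx))).trans (a1 x).symm)
    | b => exact b0.trans b1.symm
    | c => exact c0.trans c1.symm
    | d => exact d0.trans d1.symm
    | f1 => exact e0.trans e1.symm
    | f2 => exact f0.trans f1.symm
  rw [hFt] at hle
  have heq : ψ₀ (gen S p₁ p₂ (GenSym.elt a)) = ψ₁ (gen S p₁ p₂ (GenSym.elt a)) :=
    hle (Subgroup.mem_top _)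
  have h3 : g (GenSym.elt (φ₀ a)) = g (GenSym.elt (φ₁ a)) := (a0 a).symm.trans (heq.trans (a1 a))
  exact ha (hnB a (GenSym.elt.inj (ginj h3)))

end SC

/-- Lemma `lem:finite-generation`: the `L`-structure `𝒜` is finitely
generated (there is a finite subset of `A` whose closure under the interpretations of all
function symbols of `L` is all of `A`) if and only if the group `G(𝒜)` is finitely
generated. -/
theorem stmt_8 (S : IndexedStructure) (p₁ p₂ : ℕ)
    (hp₁ : p₁.Prime) (hp₂ : p₂.Prime) (hne : p₁ ≠ p₂)
    (hbig₁ : 10 ^ 10 < p₁) (hbig₂ : 10 ^ 10 < p₂) :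
    (∃ s : Set S.A, s.Finite ∧
      ∀ B : Set S.A, s ⊆ B →
        (∀ m, 1 ≤ m → S.isFunc m →
          ∀ as : Fin (S.arity m) → S.A, (∀ i, as i ∈ B) → S.funcInterp m as ∈ B) →
        B = Set.univ) ↔
    Group.FG (GA S p₁ p₂) := by
  exact ⟨SC.easy S p₁ p₂, SC.hard S p₁ p₂ hbig₁ hbig₂⟩
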